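/- arXiv:1611.05427 — 5 statements merged into one kernel-verified Lean document; each statement's English description precedes it below -/
import Mathlib

section
/- Let n ≥ 1, let λ : Fin n → ℝ, and for smooth functions v : ℂⁿ → ℂ define ∂̄_j v = ∂v/∂z̄_j + λ_j z_j v and δ_j v = −∂v/∂z_j + λ_j z̄_j v − z̄_j v. Then for every smooth compactly supported v : ℂⁿ → ℂ and every index j, one has the weighted L² norm identity ∫_{ℂⁿ} |δ_j v|² e^{|z|²} dλ(z) − ∫_{ℂⁿ} |∂̄_j v|² e^{|z|²} dλ(z) = (−1 + 2λ_j) ∫_{ℂⁿ} |v|² e^{|z|²} dλ(z). -/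
open MeasureTheory Complex Finset

noncomputable section

/-- Wirtinger derivative `∂v/∂z̄_j = (1/2)(∂/∂x_j + i ∂/∂y_j) v` on `ℂⁿ`. -/
def wbar {n : ℕ} (j : Fin n) (v : (Fin n → ℂ) → ℂ) (z : Fin n → ℂ) : ℂ :=
  (1 / 2 : ℂ) * (fderiv ℝ v z (Pi.single j 1) + Complex.I * fderiv ℝ v z (Pi.single j Complex.I))

/-- Wirtinger derivative `∂v/∂z_j = (1/2)(∂/∂x_j − i ∂/∂y_j) v` on `ℂⁿ`. -/
def whol {n : ℕ} (j : Fin n) (v : (Fin n → ℂ) → ℂ) (z : Fin n → ℂ) : ℂ :=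
  (1 / 2 : ℂ) * (fderiv ℝ v z (Pi.single j 1) - Complex.I * fderiv ℝ v z (Pi.single j Complex.I))

/-- The operator `∂̄_j v = ∂v/∂z̄_j + λ_j z_j v`. -/
def dbarOp {n : ℕ} (lam : Fin n → ℝ) (j : Fin n) (v : (Fin n → ℂ) → ℂ) (z : Fin n → ℂ) : ℂ :=
  wbar j v z + (lam j : ℂ) * z j * v z

/-- The operator `δ_j v = −∂v/∂z_j + λ_j z̄_j v − z̄_j v`. -/
def deltaOp {n : ℕ} (lam : Fin n → ℝ) (j : Fin n) (v : (Fin n → ℂ) → ℂ) (z : Fin n → ℂ) : ℂ :=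
  - whol j v z + (lam j : ℂ) * (starRingEnd ℂ) (z j) * v z - (starRingEnd ℂ) (z j) * v z

/-- The weight `e^{|z|²}`. -/
def wgt {n : ℕ} (z : Fin n → ℂ) : ℝ := Real.exp (∑ j, Complex.normSq (z j))

lemma int_fderiv_zero {n : ℕ} (f : (Fin n → ℂ) → ℝ) (hf : ContDiff ℝ (⊤ : ℕ∞) f)
    (hc : HasCompactSupport f) (u : Fin n → ℂ) :
    Integrable (fun z => fderiv ℝ f z u) ∧ ∫ z : Fin n → ℂ, fderiv ℝ f z u = 0 := by
  have hi : Integrable (fun z => fderiv ℝ f z u) := by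
    apply Continuous.integrable_of_hasCompactSupport
    · exact (hf.continuous_fderiv (by simp)).clm_apply continuous_const
    · exact hc.fderiv_apply (𝕜 := ℝ) u
  refine ⟨hi, ?_⟩
  have h := integral_mul_fderiv_eq_neg_fderiv_mul_of_integrable (μ := (volume : Measure (Fin n → ℂ)))
    (𝕜 := ℝ) (f := fun _ => (1 : ℝ)) (g := f) (v := u) (by simp) (by simpa using hi)
    (by simpa using hf.continuous.integrable_of_hasCompactSupport hc)
    (by fun_prop) (fun x _ => hf.differentiable (by simp) x)
  simpa using h

lemma wgt_contDiff {n : ℕ} : ContDiff ℝ (⊤ : ℕ∞) (wgt (n := n)) := by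
  have : (wgt (n := n)) = fun z => Real.exp (∑ j, (reCLM (z j) * reCLM (z j) + imCLM (z j) * imCLM (z j))) := by
    funext z; simp [wgt, normSq_apply]
  rw [this]; fun_prop

lemma wgt_fderiv {n : ℕ} (j : Fin n) (c : ℂ) (z : Fin n → ℂ) :
    fderiv ℝ wgt z (Pi.single j c) = 2 * ((z j).re * c.re + (z j).im * c.im) * wgt z := by
  have h1 : ∀ i : Fin n, HasFDerivAt (fun z : Fin n → ℂ => normSq (z i))
      ((2 * (z i).re) • reCLM.comp (ContinuousLinearMap.proj (R := ℝ) (φ := fun _ : Fin n => ℂ) i)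
        + (2 * (z i).im) • imCLM.comp (ContinuousLinearMap.proj (R := ℝ) (φ := fun _ : Fin n => ℂ) i)) z := by
    intro i
    have hr := (reCLM.comp (ContinuousLinearMap.proj (R := ℝ) (φ := fun _ : Fin n => ℂ) i)).hasFDerivAt (x := z)
    have hm := (imCLM.comp (ContinuousLinearMap.proj (R := ℝ) (φ := fun _ : Fin n => ℂ) i)).hasFDerivAt (x := z)
    refine ((hr.mul hr).add (hm.mul hm)).congr_fderiv ?_ |>.congr_of_eventuallyEq ?_
    · ext u; simp; ring
    · filter_upwards with y; simp [normSq_apply]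
  have h2 := (HasFDerivAt.fun_sum (u := Finset.univ) (fun i _ => h1 i)).exp
  have h3 : HasFDerivAt wgt _ z := h2
  rw [h3.fderiv]
  have key : ∑ x : Fin n, (2 * (z x).re * (Pi.single (M := fun _ => ℂ) j c x).re
      + 2 * (z x).im * (Pi.single (M := fun _ => ℂ) j c x).im) = 2 * ((z j).re * c.re + (z j).im * c.im) := by
    rw [Finset.sum_eq_single j]
    · simp; ring
    · intro b _ hb; simp [Pi.single_eq_of_ne hb]
    · simp
  simp [wgt, key]
  ring

lemma snd_symm {n : ℕ} (q : (Fin n → ℂ) → ℝ) (hq : ContDiff ℝ (⊤ : ℕ∞) q) (u w z : Fin n → ℂ) :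
    fderiv ℝ (fun z => fderiv ℝ q z u) z w = fderiv ℝ (fun z => fderiv ℝ q z w) z u := by
  have hd : DifferentiableAt ℝ (fderiv ℝ q) z :=
    ((hq.fderiv_right (m := (⊤ : ℕ∞)) (by simp)).differentiable (by simp)) z
  have hs : IsSymmSndFDerivAt ℝ q z := hq.contDiffAt.isSymmSndFDerivAt (by
    rw [minSmoothness_of_isRCLikeNormedField]; exact WithTop.coe_le_coe.2 le_top)
  rw [fderiv_clm_apply hd (by fun_prop), fderiv_clm_apply hd (by fun_prop)]
  simpa using hs w u

/-- The pointwise identity. -/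
lemma pointwise {n : ℕ} (lam : Fin n → ℝ) (j : Fin n) (v : (Fin n → ℂ) → ℂ)
    (p q F G : (Fin n → ℂ) → ℝ) (hp : ContDiff ℝ (⊤ : ℕ∞) p) (hq : ContDiff ℝ (⊤ : ℕ∞) q)
    (hv : v = fun z => (p z : ℂ) + (q z : ℂ) * I)
    (hF : F = fun z => wgt z * (((p z * fderiv ℝ q z (Pi.single j I) - q z * fderiv ℝ p z (Pi.single j I)) * (1 / 2))
      + (1 / 2 - lam j) * ((z j).re * (p z * p z + q z * q z))))
    (hG : G = fun z => wgt z * (((q z * fderiv ℝ p z (Pi.single j 1) - p z * fderiv ℝ q z (Pi.single j 1)) * (1 / 2))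
      + (1 / 2 - lam j) * ((z j).im * (p z * p z + q z * q z)))) (z : Fin n → ℂ) :
    ‖deltaOp lam j v z‖ ^ 2 * wgt z - ‖dbarOp lam j v z‖ ^ 2 * wgt z
      = (-1 + 2 * lam j) * (‖v z‖ ^ 2 * wgt z)
        + fderiv ℝ F z (Pi.single j 1) + fderiv ℝ G z (Pi.single j I) := by
  have hpd := (hp.differentiable (by simp) z).hasFDerivAt
  have hqd := (hq.differentiable (by simp) z).hasFDerivAt
  have hwd := (wgt_contDiff.differentiable (by simp) z).hasFDerivAt
  have hD : ∀ (r : (Fin n → ℂ) → ℝ) (u : Fin n → ℂ), ContDiff ℝ (⊤ : ℕ∞) r →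
      HasFDerivAt (fun z => fderiv ℝ r z u) (fderiv ℝ (fun z => fderiv ℝ r z u) z) z := by
    intro r u hr
    apply DifferentiableAt.hasFDerivAt
    have hd : DifferentiableAt ℝ (fderiv ℝ r) z :=
      ((hr.fderiv_right (m := (⊤ : ℕ∞)) (by simp)).differentiable (by simp)) z
    fun_prop
  have hr := (reCLM.comp (ContinuousLinearMap.proj (R := ℝ) (φ := fun _ : Fin n => ℂ) j)).hasFDerivAt (x := z)
  have hm := (imCLM.comp (ContinuousLinearMap.proj (R := ℝ) (φ := fun _ : Fin n => ℂ) j)).hasFDerivAt (x := z)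
  have hFd := HasFDerivAt.congr_of_eventuallyEq (f₁ := F) (hwd.mul ((((hpd.mul (hD q (Pi.single j I) hq)).sub
    (hqd.mul (hD p (Pi.single j I) hp))).mul_const (1 / 2)).add
    ((hr.mul ((hpd.mul hpd).add (hqd.mul hqd))).const_mul (1 / 2 - lam j))))
    (.of_forall fun y => by rw [hF]; rfl)
  have hGd := HasFDerivAt.congr_of_eventuallyEq (f₁ := G) (hwd.mul ((((hqd.mul (hD p (Pi.single j 1) hp)).sub
    (hpd.mul (hD q (Pi.single j 1) hq))).mul_const (1 / 2)).add
    ((hm.mul ((hpd.mul hpd).add (hqd.mul hqd))).const_mul (1 / 2 - lam j))))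
    (.of_forall fun y => by rw [hG]; rfl)
  have hvd : HasFDerivAt v (ofRealCLM.comp (fderiv ℝ p z) + (ofRealCLM.comp (fderiv ℝ q z)).smulRight I) z := by
    rw [hv]
    exact ((ofRealCLM.hasFDerivAt.comp z hpd).add
      ((ofRealCLM.hasFDerivAt.comp z hqd).mul_const I)).congr_fderiv (by ext u; simp [mul_comm])
  have hvu : ∀ u, fderiv ℝ v z u = (fderiv ℝ p z u : ℂ) + (fderiv ℝ q z u : ℂ) * I := by
    intro u; rw [hvd.fderiv]; simp
  have s1 := snd_symm p hp (Pi.single j I) (Pi.single j 1) z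
  have s2 := snd_symm q hq (Pi.single j I) (Pi.single j 1) z
  rw [hFd.fderiv, hGd.fderiv]
  simp only [← normSq_eq_norm_sq, deltaOp, dbarOp, whol, wbar, hvu]
  simp [normSq_apply, s1, s2, wgt_fderiv, hv]
  ring

theorem norm_identity (n : ℕ) (hn : 1 ≤ n) (lam : Fin n → ℝ) (j : Fin n)
    (v : (Fin n → ℂ) → ℂ) (hv : ContDiff ℝ (⊤ : ℕ∞) v) (hvcs : HasCompactSupport v) :
    (∫ z : Fin n → ℂ, ‖deltaOp lam j v z‖ ^ 2 * wgt z)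
        - (∫ z : Fin n → ℂ, ‖dbarOp lam j v z‖ ^ 2 * wgt z)
      = (-1 + 2 * lam j) * ∫ z : Fin n → ℂ, ‖v z‖ ^ 2 * wgt z := by
  have hp : ContDiff ℝ (⊤ : ℕ∞) (fun z => (v z).re) := reCLM.contDiff.comp hv
  have hq : ContDiff ℝ (⊤ : ℕ∞) (fun z => (v z).im) := imCLM.contDiff.comp hv
  have hw := wgt_contDiff (n := n)
  have hD : ∀ (r : (Fin n → ℂ) → ℝ) (u : Fin n → ℂ), ContDiff ℝ (⊤ : ℕ∞) r →
      ContDiff ℝ (⊤ : ℕ∞) (fun z => fderiv ℝ r z u) := by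
    intro r u hr
    exact (hr.fderiv_right (m := (⊤ : ℕ∞)) (by simp)).clm_apply contDiff_const
  have hr : ContDiff ℝ (⊤ : ℕ∞) (fun z : Fin n → ℂ => (z j).re) :=
    (reCLM.comp (ContinuousLinearMap.proj (R := ℝ) (φ := fun _ : Fin n => ℂ) j)).contDiff
  have hm : ContDiff ℝ (⊤ : ℕ∞) (fun z : Fin n → ℂ => (z j).im) :=
    (imCLM.comp (ContinuousLinearMap.proj (R := ℝ) (φ := fun _ : Fin n => ℂ) j)).contDiff
  obtain ⟨F, hF⟩ : ∃ F, F = fun z : Fin n → ℂ => wgt z * ((((v z).re * fderiv ℝ (fun z => (v z).im) z (Pi.single j I) - (v z).im * fderiv ℝ (fun z => (v z).re) z (Pi.single j I)) * (1 / 2))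
      + (1 / 2 - lam j) * ((z j).re * ((v z).re * (v z).re + (v z).im * (v z).im))) := ⟨_, rfl⟩
  obtain ⟨G, hG⟩ : ∃ G, G = fun z : Fin n → ℂ => wgt z * ((((v z).im * fderiv ℝ (fun z => (v z).re) z (Pi.single j 1) - (v z).re * fderiv ℝ (fun z => (v z).im) z (Pi.single j 1)) * (1 / 2))
      + (1 / 2 - lam j) * ((z j).im * ((v z).re * (v z).re + (v z).im * (v z).im))) := ⟨_, rfl⟩
  have hpt := pointwise lam j v _ _ F G hp hq (by funext z; simp) hF hG
  have hFs : ContDiff ℝ (⊤ : ℕ∞) F := by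
    rw [hF]
    exact hw.mul ((((hp.mul (hD _ _ hq)).sub (hq.mul (hD _ _ hp))).mul contDiff_const).add
      (contDiff_const.mul (hr.mul ((hp.mul hp).add (hq.mul hq)))))
  have hGs : ContDiff ℝ (⊤ : ℕ∞) G := by
    rw [hG]
    exact hw.mul ((((hq.mul (hD _ _ hp)).sub (hp.mul (hD _ _ hq))).mul contDiff_const).add
      (contDiff_const.mul (hm.mul ((hp.mul hp).add (hq.mul hq)))))
  have hFc : HasCompactSupport F := by
    apply hvcs.mono
    intro z hz h0
    apply hz
    simp [hF, h0]
  have hGc : HasCompactSupport G := by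
    apply hvcs.mono
    intro z hz h0
    apply hz
    simp [hG, h0]
  obtain ⟨iF, eF⟩ := int_fderiv_zero F hFs hFc (Pi.single j 1)
  obtain ⟨iG, eG⟩ := int_fderiv_zero G hGs hGc (Pi.single j I)
  have hvc := hv.continuous
  have hwc := hw.continuous
  have hdc : ∀ u, Continuous (fun z => fderiv ℝ v z u) := fun u =>
    (hv.continuous_fderiv (by simp)).clm_apply continuous_const
  have hd1 := hdc (Pi.single j 1)
  have hd2 := hdc (Pi.single j I)
  have hz0 : ∀ z, z ∉ tsupport v → v z = 0 ∧ fderiv ℝ v z = 0 := fun z hz =>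
    ⟨image_eq_zero_of_notMem_tsupport hz, by
      by_contra h; exact hz (support_fderiv_subset ℝ h)⟩
  have i1 : Integrable (fun z : Fin n → ℂ => ‖deltaOp lam j v z‖ ^ 2 * wgt z) := by
    apply Continuous.integrable_of_hasCompactSupport
    · unfold deltaOp whol; fun_prop
    · apply hvcs.mono'
      intro z hz
      by_contra h
      apply hz
      simp [deltaOp, whol, hz0 z h]
  have i2 : Integrable (fun z : Fin n → ℂ => ‖dbarOp lam j v z‖ ^ 2 * wgt z) := by
    apply Continuous.integrable_of_hasCompactSupport
    · unfold dbarOp wbar; fun_prop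
    · apply hvcs.mono'
      intro z hz
      by_contra h
      apply hz
      simp [dbarOp, wbar, hz0 z h]
  have i3 : Integrable (fun z : Fin n → ℂ => ‖v z‖ ^ 2 * wgt z) := by
    apply Continuous.integrable_of_hasCompactSupport
    · fun_prop
    · apply hvcs.mono
      intro z hz h
      apply hz
      simp [h]
  rw [← integral_sub i1 i2]
  simp_rw [hpt]
  have i4 : Integrable (fun z : Fin n → ℂ => (-1 + 2 * lam j) * (‖v z‖ ^ 2 * wgt z)
      + fderiv ℝ F z (Pi.single j 1)) := (i3.const_mul _).add iF
  rw [integral_add i4 iG, integral_add (i3.const_mul _) iF, eF, eG,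
    integral_const_mul]
  simp
end
end

section
/- Let ε_1 = ε_2 = −1, ε_3 = ε_4 = 1, let ξ ∈ ℝ, and for smooth functions v : ℂ⁴ → ℂ define ∂̄_j v = ∂v/∂z̄_j + ε_j ξ z_j v. Then for every smooth compactly supported v : ℂ⁴ → ℂ, ∑_{j=1}^4 ∫_{ℂ⁴} |∂̄_j v|² e^{|z|²} dλ(z) ≥ 4 ∫_{ℂ⁴} |v|² e^{|z|²} dλ(z). -/
open MeasureTheory Complex Finset

noncomputable section

/-- The signs ε₁ = ε₂ = −1, ε₃ = ε₄ = 1. -/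
def eps : Fin 4 → ℝ := ![-1, -1, 1, 1]

lemma int_fderiv_zero_s6 {n : ℕ} (F : (Fin n → ℂ) → ℂ) (hF : ContDiff ℝ (⊤ : ℕ∞) F)
    (hc : HasCompactSupport F) (e : Fin n → ℂ) : ∫ z, fderiv ℝ F z e = 0 := by
  have hd : Integrable (fun z => fderiv ℝ F z e) :=
    ((hF.continuous_fderiv (by simp)).clm_apply continuous_const).integrable_of_hasCompactSupport
      (hc.fderiv_apply (𝕜 := ℝ) e)
  have h := integral_mul_fderiv_eq_neg_fderiv_mul_of_integrable (μ := volume) (𝕜 := ℂ)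
    (f := fun _ : Fin n → ℂ => (1 : ℂ)) (g := F) (v := e) (by simp)
    (by simpa using hd) (by simpa using hF.continuous.integrable_of_hasCompactSupport hc)
    (fun x _ => by fun_prop) (fun x _ => (hF.differentiable (by simp)).differentiableAt)
  simpa using h

lemma contDiff_fderiv_apply {n : ℕ} {f : (Fin n → ℂ) → ℂ} (hf : ContDiff ℝ (⊤ : ℕ∞) f)
    (e : Fin n → ℂ) : ContDiff ℝ (⊤ : ℕ∞) (fun z => fderiv ℝ f z e) :=
  (hf.fderiv_right (m := (⊤ : ℕ∞)) (by simp)).clm_apply contDiff_const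

lemma contDiff_wbar {n : ℕ} {f : (Fin n → ℂ) → ℂ} (hf : ContDiff ℝ (⊤ : ℕ∞) f) (j : Fin n) :
    ContDiff ℝ (⊤ : ℕ∞) (wbar j f) := by
  have h1 := contDiff_fderiv_apply hf (Pi.single j 1)
  have h2 := contDiff_fderiv_apply hf (Pi.single j Complex.I)
  exact contDiff_const.mul (h1.add (contDiff_const.mul h2))

lemma contDiff_whol {n : ℕ} {f : (Fin n → ℂ) → ℂ} (hf : ContDiff ℝ (⊤ : ℕ∞) f) (j : Fin n) :
    ContDiff ℝ (⊤ : ℕ∞) (whol j f) := by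
  have h1 := contDiff_fderiv_apply hf (Pi.single j 1)
  have h2 := contDiff_fderiv_apply hf (Pi.single j Complex.I)
  exact contDiff_const.mul (h1.sub (contDiff_const.mul h2))

lemma contDiff_coord {n : ℕ} (j : Fin n) : ContDiff ℝ (⊤ : ℕ∞) (fun z : Fin n → ℂ => z j) := by
  fun_prop

lemma contDiff_conj {n : ℕ} {f : (Fin n → ℂ) → ℂ} (hf : ContDiff ℝ (⊤ : ℕ∞) f) :
    ContDiff ℝ (⊤ : ℕ∞) (fun z => (starRingEnd ℂ) (f z)) :=
  (Complex.conjCLE.contDiff).comp hf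

lemma contDiff_wgt {n : ℕ} : ContDiff ℝ (⊤ : ℕ∞) (fun z : Fin n → ℂ => ((wgt z : ℝ) : ℂ)) := by
  unfold wgt
  simp only [Complex.normSq_apply]
  refine Complex.ofRealCLM.contDiff.comp (Real.contDiff_exp.comp ?_)
  refine ContDiff.sum fun i _ => ?_
  have h1 : ContDiff ℝ (⊤ : ℕ∞) (fun z : Fin n → ℂ => (z i).re) :=
    Complex.reCLM.contDiff.comp (contDiff_coord i)
  have h2 : ContDiff ℝ (⊤ : ℕ∞) (fun z : Fin n → ℂ => (z i).im) :=
    Complex.imCLM.contDiff.comp (contDiff_coord i)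
  exact (h1.mul h1).add (h2.mul h2)

lemma contDiff_dbarOp {n : ℕ} {f : (Fin n → ℂ) → ℂ} (hf : ContDiff ℝ (⊤ : ℕ∞) f)
    (lam : Fin n → ℝ) (j : Fin n) : ContDiff ℝ (⊤ : ℕ∞) (dbarOp lam j f) :=
  (contDiff_wbar hf j).add ((contDiff_const.mul (contDiff_coord j)).mul hf)

lemma contDiff_deltaOp {n : ℕ} {f : (Fin n → ℂ) → ℂ} (hf : ContDiff ℝ (⊤ : ℕ∞) f)
    (lam : Fin n → ℝ) (j : Fin n) : ContDiff ℝ (⊤ : ℕ∞) (deltaOp lam j f) :=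
  ((contDiff_whol hf j).neg.add ((contDiff_const.mul (contDiff_conj (contDiff_coord j))).mul hf)).sub
    ((contDiff_conj (contDiff_coord j)).mul hf)

lemma hcs_of_zero {n : ℕ} {f g : (Fin n → ℂ) → ℂ} (hf : HasCompactSupport f)
    (h : ∀ z, z ∉ tsupport f → g z = 0) : HasCompactSupport g :=
  HasCompactSupport.intro hf (fun z hz => h z hz)

lemma fderiv_zero_off {n : ℕ} {f : (Fin n → ℂ) → ℂ} {z : Fin n → ℂ} (hz : z ∉ tsupport f) :
    fderiv ℝ f z = 0 := by
  by_contra h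
  exact hz (support_fderiv_subset ℝ h)

lemma hcs_dbarOp {n : ℕ} {f : (Fin n → ℂ) → ℂ} (hf : HasCompactSupport f)
    (lam : Fin n → ℝ) (j : Fin n) : HasCompactSupport (dbarOp lam j f) := by
  refine hcs_of_zero hf fun z hz => ?_
  simp [dbarOp, wbar, fderiv_zero_off hz, image_eq_zero_of_notMem_tsupport hz]

lemma hcs_deltaOp {n : ℕ} {f : (Fin n → ℂ) → ℂ} (hf : HasCompactSupport f)
    (lam : Fin n → ℝ) (j : Fin n) : HasCompactSupport (deltaOp lam j f) := by
  refine hcs_of_zero hf fun z hz => ?_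
  simp [deltaOp, whol, fderiv_zero_off hz, image_eq_zero_of_notMem_tsupport hz]

lemma int_wbar_zero {n : ℕ} (F : (Fin n → ℂ) → ℂ) (hF : ContDiff ℝ (⊤ : ℕ∞) F)
    (hc : HasCompactSupport F) (j : Fin n) : ∫ z, wbar j F z = 0 := by
  have hi : ∀ e, Integrable (fun z => fderiv ℝ F z e) := fun e =>
    ((hF.continuous_fderiv (by simp)).clm_apply continuous_const).integrable_of_hasCompactSupport
      (hc.fderiv_apply (𝕜 := ℝ) e)
  unfold wbar
  rw [integral_const_mul, integral_add (hi _) ((hi _).const_mul _), integral_const_mul,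
    int_fderiv_zero_s6 F hF hc, int_fderiv_zero_s6 F hF hc]
  simp

lemma wbar_add {n : ℕ} {f g : (Fin n → ℂ) → ℂ} (hf : ContDiff ℝ (⊤ : ℕ∞) f)
    (hg : ContDiff ℝ (⊤ : ℕ∞) g) (j : Fin n) (z : Fin n → ℂ) :
    wbar j (fun z => f z + g z) z = wbar j f z + wbar j g z := by
  have h1 := (hf.differentiable (by simp)) z
  have h2 := (hg.differentiable (by simp)) z
  unfold wbar
  rw [fderiv_fun_add h1 h2]
  simp only [add_apply]
  ring

lemma whol_add {n : ℕ} {f g : (Fin n → ℂ) → ℂ} (hf : ContDiff ℝ (⊤ : ℕ∞) f)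
    (hg : ContDiff ℝ (⊤ : ℕ∞) g) (j : Fin n) (z : Fin n → ℂ) :
    whol j (fun z => f z + g z) z = whol j f z + whol j g z := by
  have h1 := (hf.differentiable (by simp)) z
  have h2 := (hg.differentiable (by simp)) z
  unfold whol
  rw [fderiv_fun_add h1 h2]
  simp only [add_apply]
  ring

lemma wbar_mul {n : ℕ} {f g : (Fin n → ℂ) → ℂ} (hf : ContDiff ℝ (⊤ : ℕ∞) f)
    (hg : ContDiff ℝ (⊤ : ℕ∞) g) (j : Fin n) (z : Fin n → ℂ) :
    wbar j (fun z => f z * g z) z = wbar j f z * g z + f z * wbar j g z := by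
  have h1 := (hf.differentiable (by simp)) z
  have h2 := (hg.differentiable (by simp)) z
  unfold wbar
  rw [fderiv_fun_mul h1 h2]
  simp only [add_apply, smul_apply, smul_eq_mul]
  ring

lemma whol_mul {n : ℕ} {f g : (Fin n → ℂ) → ℂ} (hf : ContDiff ℝ (⊤ : ℕ∞) f)
    (hg : ContDiff ℝ (⊤ : ℕ∞) g) (j : Fin n) (z : Fin n → ℂ) :
    whol j (fun z => f z * g z) z = whol j f z * g z + f z * whol j g z := by
  have h1 := (hf.differentiable (by simp)) z
  have h2 := (hg.differentiable (by simp)) z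
  unfold whol
  rw [fderiv_fun_mul h1 h2]
  simp only [add_apply, smul_apply, smul_eq_mul]
  ring

lemma fderiv_conj_apply {n : ℕ} {f : (Fin n → ℂ) → ℂ} (hf : ContDiff ℝ (⊤ : ℕ∞) f)
    (z e : Fin n → ℂ) :
    fderiv ℝ (fun z => (starRingEnd ℂ) (f z)) z e = (starRingEnd ℂ) (fderiv ℝ f z e) := by
  have h1 := ((hf.differentiable (by simp)) z).hasFDerivAt
  have h2 := (Complex.conjCLE.toContinuousLinearMap.hasFDerivAt (x := f z)).comp z h1
  have h3 : fderiv ℝ (fun z => (starRingEnd ℂ) (f z)) z = _ := h2.fderiv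
  rw [h3]
  simp

lemma wbar_conj {n : ℕ} {f : (Fin n → ℂ) → ℂ} (hf : ContDiff ℝ (⊤ : ℕ∞) f)
    (j : Fin n) (z : Fin n → ℂ) :
    wbar j (fun z => (starRingEnd ℂ) (f z)) z = (starRingEnd ℂ) (whol j f z) := by
  unfold wbar whol
  rw [fderiv_conj_apply hf, fderiv_conj_apply hf]
  simp only [map_mul, map_sub, map_div₀, map_one, map_ofNat, Complex.conj_I]
  ring

lemma fderiv_coord {n : ℕ} (j : Fin n) (z e : Fin n → ℂ) :
    fderiv ℝ (fun z : Fin n → ℂ => z j) z e = e j := by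
  have := (ContinuousLinearMap.proj (R := ℝ) (φ := fun _ : Fin n => ℂ) j).hasFDerivAt (x := z)
  have h3 : fderiv ℝ (fun z : Fin n → ℂ => z j) z = _ := this.fderiv
  rw [h3]
  simp

lemma whol_coord {n : ℕ} (j : Fin n) (z : Fin n → ℂ) :
    whol j (fun z : Fin n → ℂ => z j) z = 1 := by
  unfold whol
  rw [fderiv_coord, fderiv_coord]
  simp
  norm_num

lemma wbar_conj_coord {n : ℕ} (j : Fin n) (z : Fin n → ℂ) :
    wbar j (fun z : Fin n → ℂ => (starRingEnd ℂ) (z j)) z = 1 := by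
  rw [wbar_conj (contDiff_coord j), whol_coord]
  simp

lemma fderiv_wgt {n : ℕ} (z e : Fin n → ℂ) :
    fderiv ℝ (fun z : Fin n → ℂ => ((wgt z : ℝ) : ℂ)) z e =
      wgt z * ∑ i, (e i * (starRingEnd ℂ) (z i) + z i * (starRingEnd ℂ) (e i)) := by
  have hw : (fun z : Fin n → ℂ => ((wgt z : ℝ) : ℂ)) =
      fun z => Complex.exp (∑ i, z i * (starRingEnd ℂ) (z i)) := by
    funext z
    simp [wgt, Complex.mul_conj]
  have hc : ∀ i : Fin n, HasFDerivAt (fun z : Fin n → ℂ => z i * (starRingEnd ℂ) (z i)) _ z :=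
    fun i => ((((contDiff_coord i).mul (contDiff_conj (contDiff_coord i))).differentiable
      (by simp)) z).hasFDerivAt
  have hs := (HasFDerivAt.fun_sum (u := Finset.univ) fun i _ => hc i).cexp
  have hz := congrFun hw z
  rw [hz, hw, hs.fderiv]
  simp only [smul_apply, ContinuousLinearMap.sum_apply, smul_eq_mul]
  congr 1
  refine Finset.sum_congr rfl fun i _ => ?_
  have h1 := ((contDiff_coord i).differentiable (by simp)) z
  have h2 := ((contDiff_conj (contDiff_coord i)).differentiable (by simp)) z
  rw [fderiv_fun_mul h1 h2]
  simp only [add_apply, smul_apply, smul_eq_mul]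
  rw [fderiv_conj_apply (contDiff_coord i), fderiv_coord]
  ring

lemma wbar_wgt {n : ℕ} (j : Fin n) (z : Fin n → ℂ) :
    wbar j (fun z : Fin n → ℂ => ((wgt z : ℝ) : ℂ)) z = z j * wgt z := by
  have key : ∀ c : ℂ, ∑ i, ((Pi.single j c : Fin n → ℂ) i * (starRingEnd ℂ) (z i) +
      z i * (starRingEnd ℂ) ((Pi.single j c : Fin n → ℂ) i)) =
      c * (starRingEnd ℂ) (z j) + z j * (starRingEnd ℂ) c := by
    intro c
    rw [Finset.sum_eq_single j]
    · simp
    · intro b _ hb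
      simp [Pi.single_eq_of_ne hb]
    · simp
  unfold wbar
  rw [fderiv_wgt, fderiv_wgt, key, key]
  simp only [map_one, Complex.conj_I]
  linear_combination (1 / 2 : ℂ) * wgt z * ((starRingEnd ℂ) (z j) - z j) * Complex.I_sq

lemma wbar_whol_comm {n : ℕ} {f : (Fin n → ℂ) → ℂ} (hf : ContDiff ℝ (⊤ : ℕ∞) f) (j : Fin n)
    (z : Fin n → ℂ) : wbar j (whol j f) z = whol j (wbar j f) z := by
  have hd : ∀ a b : Fin n → ℂ, fderiv ℝ (fun z => fderiv ℝ f z a) z b =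
      fderiv ℝ (fderiv ℝ f) z b a := by
    intro a b
    have hdf : DifferentiableAt ℝ (fderiv ℝ f) z :=
      (hf.fderiv_right (m := (⊤ : ℕ∞)) (by simp)).differentiable (by simp) z
    rw [fderiv_clm_apply hdf (differentiableAt_const _)]
    simp
  have hsym : IsSymmSndFDerivAt ℝ f z := hf.contDiffAt.isSymmSndFDerivAt
    (by simp only [minSmoothness_of_isRCLikeNormedField]; exact WithTop.coe_le_coe.2 (le_top : (2 : ℕ∞) ≤ ⊤))
  have h1 := (contDiff_fderiv_apply hf (Pi.single j 1)).differentiable (by simp) z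
  have h2 := (contDiff_fderiv_apply hf (Pi.single j Complex.I)).differentiable (by simp) z
  have e1 : ∀ b, fderiv ℝ (whol j f) z b = (1 / 2 : ℂ) * (fderiv ℝ (fderiv ℝ f) z b (Pi.single j 1)
      - Complex.I * fderiv ℝ (fderiv ℝ f) z b (Pi.single j Complex.I)) := by
    intro b
    unfold whol
    rw [fderiv_const_mul (h1.fun_sub (h2.const_mul _)), fderiv_fun_sub h1 (h2.const_mul _),
      fderiv_const_mul h2]
    simp only [sub_apply, smul_apply, smul_eq_mul, hd]
  have e2 : ∀ b, fderiv ℝ (wbar j f) z b = (1 / 2 : ℂ) * (fderiv ℝ (fderiv ℝ f) z b (Pi.single j 1)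
      + Complex.I * fderiv ℝ (fderiv ℝ f) z b (Pi.single j Complex.I)) := by
    intro b
    unfold wbar
    rw [fderiv_const_mul (h1.fun_add (h2.const_mul _)), fderiv_fun_add h1 (h2.const_mul _),
      fderiv_const_mul h2]
    simp only [add_apply, smul_apply, smul_eq_mul, hd]
  rw [wbar, whol, e1, e1, e2, e2, hsym (Pi.single j Complex.I) (Pi.single j 1)]
  ring

lemma fderiv_const_zero {n : ℕ} (c : ℂ) (z e : Fin n → ℂ) :
    fderiv ℝ (fun _ : Fin n → ℂ => c) z e = 0 := by simp

lemma wbar_const {n : ℕ} (c : ℂ) (j : Fin n) (z : Fin n → ℂ) :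
    wbar j (fun _ : Fin n → ℂ => c) z = 0 := by simp [wbar]

lemma whol_const {n : ℕ} (c : ℂ) (j : Fin n) (z : Fin n → ℂ) :
    whol j (fun _ : Fin n → ℂ => c) z = 0 := by simp [whol]

lemma op_commutator {n : ℕ} {f : (Fin n → ℂ) → ℂ} (hf : ContDiff ℝ (⊤ : ℕ∞) f) (lam : Fin n → ℝ)
    (j : Fin n) (z : Fin n → ℂ) :
    deltaOp lam j (dbarOp lam j f) z =
      dbarOp lam j (deltaOp lam j f) z + (1 - 2 * (lam j : ℂ)) * f z := by
  have hz := contDiff_coord j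
  have hzc := contDiff_conj (contDiff_coord j)
  have hk : ∀ c : ℂ, ContDiff ℝ (⊤ : ℕ∞) (fun _ : Fin n → ℂ => c) := fun c => contDiff_const
  have ed : deltaOp lam j f = fun z => (-1 : ℂ) * whol j f z +
      ((lam j : ℂ) - 1) * ((starRingEnd ℂ) (z j) * f z) := by
    funext z
    simp only [deltaOp]
    ring
  have eb : dbarOp lam j f = fun z => wbar j f z + (lam j : ℂ) * (z j * f z) := by
    funext z
    simp only [dbarOp]
    ring
  have h1 : whol j (dbarOp lam j f) z = whol j (wbar j f) z +
      (lam j : ℂ) * (f z + z j * whol j f z) := by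
    rw [eb, whol_add (contDiff_wbar hf j) ((hk _).mul (hz.mul hf)), whol_mul (hk _) (hz.mul hf),
      whol_mul hz hf, whol_coord, whol_const]
    ring
  have h2 : wbar j (deltaOp lam j f) z = - wbar j (whol j f) z +
      ((lam j : ℂ) - 1) * (f z + (starRingEnd ℂ) (z j) * wbar j f z) := by
    rw [ed, wbar_add ((hk _).mul (contDiff_whol hf j)) ((hk _).mul (hzc.mul hf)),
      wbar_mul (hk _) (hzc.mul hf), wbar_mul (hk _) (contDiff_whol hf j),
      wbar_mul hzc hf, wbar_conj_coord, wbar_const, wbar_const]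
    ring
  have h3 := wbar_whol_comm hf j z
  rw [deltaOp, h1]
  have h4 : dbarOp lam j (deltaOp lam j f) z =
    wbar j (deltaOp lam j f) z + (lam j : ℂ) * z j * deltaOp lam j f z := rfl
  rw [h4, h2, h3, ed, eb]
  ring

lemma int_adj {n : ℕ} {f g : (Fin n → ℂ) → ℂ} (hf : ContDiff ℝ (⊤ : ℕ∞) f)
    (hg : ContDiff ℝ (⊤ : ℕ∞) g) (hc : HasCompactSupport f) (lam : Fin n → ℝ) (j : Fin n) :
    ∫ z, dbarOp lam j f z * (starRingEnd ℂ) (g z) * wgt z =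
      ∫ z, f z * (starRingEnd ℂ) (deltaOp lam j g z) * wgt z := by
  have hgc := contDiff_conj hg
  have hw := contDiff_wgt (n := n)
  have i1 : Integrable (fun z => dbarOp lam j f z * (starRingEnd ℂ) (g z) * (wgt z : ℂ)) :=
    (((contDiff_dbarOp hf lam j).mul hgc).mul hw).continuous.integrable_of_hasCompactSupport
      ((hcs_dbarOp hc lam j).mul_right.mul_right)
  have i2 : Integrable (fun z => f z * (starRingEnd ℂ) (deltaOp lam j g z) * (wgt z : ℂ)) :=
    ((hf.mul (contDiff_conj (contDiff_deltaOp hg lam j))).mul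
      hw).continuous.integrable_of_hasCompactSupport (hc.mul_right.mul_right)
  rw [← sub_eq_zero, ← integral_sub i1 i2]
  rw [← int_wbar_zero (fun z => f z * (starRingEnd ℂ) (g z) * (wgt z : ℂ))
    ((hf.mul hgc).mul hw) (hc.mul_right.mul_right) j]
  congr 1
  funext z
  rw [wbar_mul (hf.mul hgc) hw, wbar_mul hf hgc, wbar_conj hg, wbar_wgt]
  simp only [dbarOp, deltaOp, map_add, map_sub, map_mul, map_neg, Complex.conj_conj,
    Complex.conj_ofReal]
  ring

lemma int_adj' {n : ℕ} {f g : (Fin n → ℂ) → ℂ} (hf : ContDiff ℝ (⊤ : ℕ∞) f)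
    (hg : ContDiff ℝ (⊤ : ℕ∞) g) (hc : HasCompactSupport g) (lam : Fin n → ℝ) (j : Fin n) :
    ∫ z, deltaOp lam j f z * (starRingEnd ℂ) (g z) * wgt z =
      ∫ z, f z * (starRingEnd ℂ) (dbarOp lam j g z) * wgt z := by
  have h := congrArg (starRingEnd ℂ) (int_adj hg hf hc lam j)
  rw [← integral_conj, ← integral_conj] at h
  simp only [map_mul, Complex.conj_conj, Complex.conj_ofReal] at h
  simp only [mul_comm (deltaOp lam j f _), mul_comm (f _)]
  exact h.symm

lemma int_norm {n : ℕ} (g : (Fin n → ℂ) → ℂ) :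
    ((∫ z, ‖g z‖ ^ 2 * wgt z : ℝ) : ℂ) = ∫ z, g z * (starRingEnd ℂ) (g z) * wgt z := by
  rw [← integral_complex_ofReal]
  congr 1
  funext z
  rw [Complex.mul_conj, Complex.normSq_eq_norm_sq]
  push_cast
  ring

lemma bochner_identity {n : ℕ} {f : (Fin n → ℂ) → ℂ} (hf : ContDiff ℝ (⊤ : ℕ∞) f)
    (hc : HasCompactSupport f) (lam : Fin n → ℝ) (j : Fin n) :
    ∫ z, ‖dbarOp lam j f z‖ ^ 2 * wgt z =
      (∫ z, ‖deltaOp lam j f z‖ ^ 2 * wgt z) + (1 - 2 * lam j) * ∫ z, ‖f z‖ ^ 2 * wgt z := by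
  have hw := contDiff_wgt (n := n)
  have hb := contDiff_dbarOp hf lam j
  have hd := contDiff_deltaOp hf lam j
  have i1 : Integrable (fun z => f z * (starRingEnd ℂ) (dbarOp lam j (deltaOp lam j f) z) *
      (wgt z : ℂ)) :=
    ((hf.mul (contDiff_conj (contDiff_dbarOp hd lam j))).mul
      hw).continuous.integrable_of_hasCompactSupport (hc.mul_right.mul_right)
  have i2 : Integrable (fun z => f z * (starRingEnd ℂ) (f z) * (wgt z : ℂ)) :=
    ((hf.mul (contDiff_conj hf)).mul
      hw).continuous.integrable_of_hasCompactSupport (hc.mul_right.mul_right)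
  apply Complex.ofReal_injective
  push_cast
  rw [int_norm, int_norm, int_norm, int_adj hf hb hc,
    int_adj' hf hd (hcs_deltaOp hc lam j), ← integral_const_mul,
    ← integral_add i1 (i2.const_mul _)]
  congr 1
  funext z
  rw [op_commutator hf]
  simp only [map_add, map_sub, map_mul, map_one, map_ofNat, Complex.conj_ofReal]
  ring

theorem function_estimate_C4 (ξ : ℝ)
    (v : (Fin 4 → ℂ) → ℂ) (hv : ContDiff ℝ (⊤ : ℕ∞) v) (hvcs : HasCompactSupport v) :
    4 * ∫ z : Fin 4 → ℂ, ‖v z‖ ^ 2 * wgt z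
      ≤ ∑ j, ∫ z : Fin 4 → ℂ, ‖dbarOp (fun i => eps i * ξ) j v z‖ ^ 2 * wgt z := by
  simp only [bochner_identity hv hvcs]
  have hn : ∀ j, 0 ≤ ∫ z, ‖deltaOp (fun i => eps i * ξ) j v z‖ ^ 2 * wgt z := fun j =>
    integral_nonneg fun z => mul_nonneg (sq_nonneg _) (Real.exp_pos _).le
  have h0 := hn 0
  have h1 := hn 1
  have h2 := hn 2
  have h3 := hn 3
  have e0 : eps 0 = -1 := rfl
  have e1 : eps 1 = -1 := rfl
  have e2 : eps 2 = 1 := rfl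
  have e3 : eps 3 = 1 := rfl
  rw [Fin.sum_univ_four, e0, e1, e2, e3]
  linarith
end
end

section
/- Let n ≥ 1, let λ : Fin n → ℝ, and suppose there exist indices r, s with λ_r < 0 and λ_s > 0. For smooth functions v : ℂⁿ → ℂ define ∂̄_j v = ∂v/∂z̄_j + λ_j z_j v. Then for every smooth compactly supported v : ℂⁿ → ℂ, ∑_{j=1}^n ∫_{ℂⁿ} |∂̄_j v|² e^{|z|²} dλ(z) ≥ ∫_{ℂⁿ} |v|² e^{|z|²} dλ(z). -/
open MeasureTheory Complex Finset

noncomputable section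

lemma aux_int_zero {n : ℕ} (F : (Fin n → ℂ) → ℝ) (hF : ContDiff ℝ 1 F) (hc : HasCompactSupport F)
    (e : Fin n → ℂ) : Integrable (fun z => fderiv ℝ F z e) ∧ ∫ z, fderiv ℝ F z e = 0 := by
  have hc' : HasCompactSupport (fun z => fderiv ℝ F z e) := hc.fderiv_apply (𝕜 := ℝ) e
  have hcont : Continuous (fun z => fderiv ℝ F z e) :=
    (hF.continuous_fderiv (by norm_num)).clm_apply continuous_const
  have hi := hcont.integrable_of_hasCompactSupport (μ := volume) hc'
  refine ⟨hi, ?_⟩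
  have h := integral_mul_fderiv_eq_neg_fderiv_mul_of_integrable (𝕜 := ℝ) (μ := (volume : Measure (Fin n → ℂ)))
    (f := fun _ => (1:ℝ)) (g := F) (v := e) (by simp) (by simpa using hi)
    (by simpa using hF.continuous.integrable_of_hasCompactSupport hc)
    (by fun_prop) (fun x _ => hF.differentiable (by norm_num) x)
  simpa using h

/-- derivative along a line -/
lemma aux_line {n : ℕ} (F : (Fin n → ℂ) → ℝ) (hF : ContDiff ℝ 1 F) (z e : Fin n → ℂ) :
    HasDerivAt (fun t : ℝ => F (z + t • e)) (fderiv ℝ F z e) 0 :=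
  ((hF.differentiable (by norm_num)) z).hasFDerivAt.hasLineDerivAt e

lemma aux_wgt_smooth {n : ℕ} : ContDiff ℝ 1 (wgt (n := n)) := by
  unfold wgt
  simp only [Complex.normSq_apply]
  have h1 : ∀ j, ContDiff ℝ 1 (fun z : Fin n → ℂ => (z j).re) := fun j =>
    (Complex.reCLM.comp (ContinuousLinearMap.proj (R := ℝ) (φ := fun _ : Fin n => ℂ) j)).contDiff
  have h2 : ∀ j, ContDiff ℝ 1 (fun z : Fin n → ℂ => (z j).im) := fun j =>
    (Complex.imCLM.comp (ContinuousLinearMap.proj (R := ℝ) (φ := fun _ : Fin n => ℂ) j)).contDiff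
  exact Real.contDiff_exp.comp (ContDiff.sum fun j _ => ((h1 j).mul (h1 j)).add ((h2 j).mul (h2 j)))

lemma aux_wgt_line {n : ℕ} (z : Fin n → ℂ) (j : Fin n) (c : ℂ) :
    HasDerivAt (fun t : ℝ => wgt (z + t • (Pi.single j c : Fin n → ℂ)))
      (2 * ((z j).re * c.re + (z j).im * c.im) * wgt z) 0 := by
  have key : ∀ k, HasDerivAt (fun t : ℝ => normSq ((z + t • (Pi.single j c : Fin n → ℂ)) k))
      (if k = j then 2 * ((z j).re * c.re + (z j).im * c.im) else 0) 0 := by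
    intro k
    by_cases hk : k = j
    · subst hk
      simp only [Complex.normSq_apply, Pi.add_apply, Pi.smul_apply, Pi.single_eq_same,
        add_re, add_im, smul_re, smul_im, smul_eq_mul, if_true]
      have a := ((hasDerivAt_id (0:ℝ)).mul_const c.re).const_add (z k).re
      have b := ((hasDerivAt_id (0:ℝ)).mul_const c.im).const_add (z k).im
      refine ((a.mul a).add (b.mul b)).congr_deriv ?_
      simp
      ring
    · simp [hk, hasDerivAt_const]
  have := (HasDerivAt.fun_sum (u := univ) fun k _ => key k).exp
  unfold wgt
  convert this using 1
  simp [mul_comm]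

lemma aux_pt (a1 a2 b1 b2 p q x y l : ℝ) :
    ‖(1/2:ℂ) * (⟨a1,a2⟩ + I * ⟨b1,b2⟩) + (l:ℂ) * ⟨x,y⟩ * ⟨p,q⟩‖^2 -
    ‖-((1/2:ℂ) * (⟨a1,a2⟩ - I * ⟨b1,b2⟩)) + (l:ℂ) * ⟨x,-y⟩ * ⟨p,q⟩ - ⟨x,-y⟩ * ⟨p,q⟩‖^2
    = (a2*b1 - a1*b2) + (2*l-1)*x*(a1*p+a2*q) + y*(a2*p-a1*q)
      + (2*l-1)*y*(b1*p+b2*q) - x*(b2*p-b1*q) + (2*l-1)*(x^2+y^2)*(p^2+q^2) := by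
  rw [← Complex.normSq_eq_norm_sq, ← Complex.normSq_eq_norm_sq, Complex.normSq_apply, Complex.normSq_apply]
  have e : (1/2:ℂ) = ⟨1/2, 0⟩ := by apply Complex.ext <;> simp
  rw [e]
  simp
  ring

lemma aux_symm {n : ℕ} (p : (Fin n → ℂ) → ℝ) (hp : ContDiff ℝ 2 p) (z e f : Fin n → ℂ) :
    fderiv ℝ (fun w => fderiv ℝ p w e) z f = fderiv ℝ (fun w => fderiv ℝ p w f) z e := by
  have hd : DifferentiableAt ℝ (fderiv ℝ p) z :=
    (hp.fderiv_right (m := 1) (by norm_num)).differentiable (by norm_num) z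
  have hs : IsSymmSndFDerivAt ℝ p z := hp.contDiffAt.isSymmSndFDerivAt (by simp)
  have h1 : ∀ e f, fderiv ℝ (fun w => fderiv ℝ p w e) z f = fderiv ℝ (fderiv ℝ p) z f e := by
    intro e f
    rw [fderiv_clm_apply hd (by fun_prop)]
    simp
  rw [h1, h1]
  exact hs f e

/-- The flux component. -/
def flux {n : ℕ} (p q g : (Fin n → ℂ) → ℝ) (c k : ℝ) (e : Fin n → ℂ) (z : Fin n → ℂ) : ℝ :=
  (c * (q z * fderiv ℝ p z e - p z * fderiv ℝ q z e) + k * g z * (p z ^ 2 + q z ^ 2)) * wgt z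

lemma flux_smooth {n : ℕ} (p q g : (Fin n → ℂ) → ℝ) (hp : ContDiff ℝ 2 p) (hq : ContDiff ℝ 2 q)
    (hg : ContDiff ℝ 1 g) (c k : ℝ) (e : Fin n → ℂ) : ContDiff ℝ 1 (flux p q g c k e) := by
  have hp1 : ContDiff ℝ 1 p := hp.of_le (by norm_num)
  have hq1 : ContDiff ℝ 1 q := hq.of_le (by norm_num)
  have hp' : ContDiff ℝ 1 (fun z => fderiv ℝ p z e) :=
    (hp.fderiv_right (m := 1) (by norm_num)).clm_apply contDiff_const
  have hq' : ContDiff ℝ 1 (fun z => fderiv ℝ q z e) :=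
    (hq.fderiv_right (m := 1) (by norm_num)).clm_apply contDiff_const
  have hw := aux_wgt_smooth (n := n)
  unfold flux
  fun_prop

lemma flux_supp {n : ℕ} (p q g : (Fin n → ℂ) → ℝ) (hp : HasCompactSupport p)
    (hq : HasCompactSupport q) (c k : ℝ) (e : Fin n → ℂ) :
    HasCompactSupport (flux p q g c k e) := by
  refine HasCompactSupport.intro (K := tsupport p ∪ tsupport q) (hp.isCompact.union hq.isCompact) ?_
  intro z hz
  rw [Set.mem_union, not_or] at hz
  have h1 := image_eq_zero_of_notMem_tsupport hz.1
  have h2 := image_eq_zero_of_notMem_tsupport hz.2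
  simp [flux, h1, h2]

lemma flux_deriv {n : ℕ} (p q g : (Fin n → ℂ) → ℝ) (hp : ContDiff ℝ 2 p) (hq : ContDiff ℝ 2 q)
    (hg : ContDiff ℝ 1 g) (c k : ℝ) (e z : Fin n → ℂ) (j : Fin n) (u : ℂ) (f : Fin n → ℂ)
    (hf : f = Pi.single j u) :
    fderiv ℝ (flux p q g c k e) z f =
      (c * (fderiv ℝ q z f * fderiv ℝ p z e + q z * fderiv ℝ (fun w => fderiv ℝ p w e) z f
        - (fderiv ℝ p z f * fderiv ℝ q z e + p z * fderiv ℝ (fun w => fderiv ℝ q w e) z f))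
        + (k * fderiv ℝ g z f * (p z ^ 2 + q z ^ 2)
          + k * g z * (2 * p z * fderiv ℝ p z f + 2 * q z * fderiv ℝ q z f))) * wgt z
      + (c * (q z * fderiv ℝ p z e - p z * fderiv ℝ q z e) + k * g z * (p z ^ 2 + q z ^ 2))
        * (2 * ((z j).re * u.re + (z j).im * u.im) * wgt z) := by
  have hp1 : ContDiff ℝ 1 p := hp.of_le (by norm_num)
  have hq1 : ContDiff ℝ 1 q := hq.of_le (by norm_num)
  have hp' : ContDiff ℝ 1 (fun z => fderiv ℝ p z e) :=
    (hp.fderiv_right (m := 1) (by norm_num)).clm_apply contDiff_const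
  have hq' : ContDiff ℝ 1 (fun z => fderiv ℝ q z e) :=
    (hq.fderiv_right (m := 1) (by norm_num)).clm_apply contDiff_const
  have L0 := aux_line _ (flux_smooth p q g hp hq hg c k e) z f
  have Lp := aux_line _ hp1 z f
  have Lq := aux_line _ hq1 z f
  have Lp' := aux_line _ hp' z f
  have Lq' := aux_line _ hq' z f
  have Lg := aux_line _ hg z f
  have Lw := aux_wgt_line z j u
  rw [← hf] at Lw
  have L := (((((Lq.mul Lp').sub (Lp.mul Lq')).const_mul c).add
    ((Lg.const_mul k).mul ((Lp.pow 2).add (Lq.pow 2)))).mul Lw)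
  rw [L0.unique L]
  simp

theorem function_estimate_general (n : ℕ) (hn : 1 ≤ n) (lam : Fin n → ℝ)
    (r s : Fin n) (hlr : lam r < 0) (hls : 0 < lam s)
    (v : (Fin n → ℂ) → ℂ) (hv : ContDiff ℝ (⊤ : ℕ∞) v) (hvcs : HasCompactSupport v) :
    ∫ z : Fin n → ℂ, ‖v z‖ ^ 2 * wgt z
      ≤ ∑ j, ∫ z : Fin n → ℂ, ‖dbarOp lam j v z‖ ^ 2 * wgt z := by
  have hv2 : ContDiff ℝ 2 v := hv.of_le (WithTop.coe_le_coe.mpr (le_top (a := (2 : ℕ∞))))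
  set p : (Fin n → ℂ) → ℝ := fun z => (v z).re with hpdef
  set q : (Fin n → ℂ) → ℝ := fun z => (v z).im with hqdef
  have hp : ContDiff ℝ 2 p := Complex.reCLM.contDiff.comp hv2
  have hq : ContDiff ℝ 2 q := Complex.imCLM.contDiff.comp hv2
  have hpc : HasCompactSupport p := hvcs.comp_left (g := Complex.re) rfl
  have hqc : HasCompactSupport q := hvcs.comp_left (g := Complex.im) rfl
  have hvd : ∀ z, DifferentiableAt ℝ v z := hv2.differentiable (by norm_num)
  have dv : ∀ z e, fderiv ℝ v z e = ⟨fderiv ℝ p z e, fderiv ℝ q z e⟩ := by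
    intro z e
    have h1 : fderiv ℝ p z = Complex.reCLM.comp (fderiv ℝ v z) :=
      (Complex.reCLM.hasFDerivAt.comp z (hvd z).hasFDerivAt).fderiv
    have h2 : fderiv ℝ q z = Complex.imCLM.comp (fderiv ℝ v z) :=
      (Complex.imCLM.hasFDerivAt.comp z (hvd z).hasFDerivAt).fderiv
    rw [h1, h2]
    apply Complex.ext <;> simp
  let X : (Fin n → ℂ) →L[ℝ] ℝ :=
    Complex.reCLM.comp (ContinuousLinearMap.proj (R := ℝ) (φ := fun _ : Fin n => ℂ) r)
  let Y : (Fin n → ℂ) →L[ℝ] ℝ :=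
    Complex.imCLM.comp (ContinuousLinearMap.proj (R := ℝ) (φ := fun _ : Fin n => ℂ) r)
  set e1 : Fin n → ℂ := Pi.single r 1 with he1
  set e2 : Fin n → ℂ := Pi.single r Complex.I with he2
  set k : ℝ := (2 * lam r - 1) / 2 with hk
  obtain ⟨i1, z1⟩ := aux_int_zero (flux p q X (1/2) k e2)
    (flux_smooth p q X hp hq X.contDiff _ _ _) (flux_supp p q X hpc hqc _ _ _) e1
  obtain ⟨i2, z2⟩ := aux_int_zero (flux p q Y (-1/2) k e1)
    (flux_smooth p q Y hp hq Y.contDiff _ _ _) (flux_supp p q Y hpc hqc _ _ _) e2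
  have hwc : Continuous (wgt (n := n)) := aux_wgt_smooth.continuous
  have iv : Integrable (fun z => ‖v z‖ ^ 2 * wgt z) := by
    apply Continuous.integrable_of_hasCompactSupport
    · have := hv2.continuous
      fun_prop
    · refine hvcs.mono ?_
      intro z hz h0
      apply hz
      simp [h0]
  have iD : Integrable (fun z => ‖dbarOp lam r v z‖ ^ 2 * wgt z) := by
    apply Continuous.integrable_of_hasCompactSupport
    · have h0 := hv2.continuous
      have h1 : ∀ e, Continuous (fun z => fderiv ℝ v z e) := fun e =>
        (hv2.continuous_fderiv (by norm_num)).clm_apply continuous_const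
      have h2 := h1 (Pi.single r 1)
      have h3 := h1 (Pi.single r Complex.I)
      unfold dbarOp wbar
      fun_prop
    · refine HasCompactSupport.intro (K := tsupport v) hvcs.isCompact ?_
      intro z hz
      have h1 := image_eq_zero_of_notMem_tsupport hz
      have h2 : fderiv ℝ v z = 0 := by
        by_contra h
        exact hz (support_fderiv_subset ℝ h)
      simp [dbarOp, wbar, h1, h2]
  have hpt : ∀ z, ‖v z‖ ^ 2 * wgt z + (fderiv ℝ (flux p q X (1/2) k e2) z e1
      + fderiv ℝ (flux p q Y (-1/2) k e1) z e2) ≤ ‖dbarOp lam r v z‖ ^ 2 * wgt z := by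
    intro z
    have hw : 0 < wgt z := Real.exp_pos _
    have hX : fderiv ℝ X z e1 = 1 := by rw [X.fderiv]; simp [X, he1]
    have hY : fderiv ℝ Y z e2 = 1 := by rw [Y.fderiv]; simp [Y, he2]
    have hXz : X z = (z r).re := rfl
    have hYz : Y z = (z r).im := rfl
    rw [flux_deriv p q X hp hq X.contDiff _ _ e2 z r 1 e1 he1,
      flux_deriv p q Y hp hq Y.contDiff _ _ e1 z r Complex.I e2 he2,
      aux_symm p hp z e2 e1, aux_symm q hq z e2 e1, hX, hY, hXz, hYz]
    have hP := aux_pt (fderiv ℝ p z e1) (fderiv ℝ q z e1) (fderiv ℝ p z e2) (fderiv ℝ q z e2)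
      (p z) (q z) (z r).re (z r).im (lam r)
    have hD : dbarOp lam r v z = (1/2:ℂ) * (⟨fderiv ℝ p z e1, fderiv ℝ q z e1⟩
        + I * ⟨fderiv ℝ p z e2, fderiv ℝ q z e2⟩)
        + (lam r:ℂ) * ⟨(z r).re,(z r).im⟩ * ⟨p z,q z⟩ := by
      unfold dbarOp wbar
      rw [dv, dv]
    rw [← hD, sub_eq_iff_eq_add] at hP
    rw [hP]
    have hvn : ‖v z‖ ^ 2 = p z ^ 2 + q z ^ 2 := by
      rw [← Complex.normSq_eq_norm_sq, Complex.normSq_apply]; ring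
    rw [hvn]
    have hN := mul_nonneg (sq_nonneg ‖-((1/2:ℂ) * (⟨fderiv ℝ p z e1, fderiv ℝ q z e1⟩
        - I * ⟨fderiv ℝ p z e2, fderiv ℝ q z e2⟩))
        + (lam r:ℂ) * ⟨(z r).re,-(z r).im⟩ * ⟨p z,q z⟩ - ⟨(z r).re,-(z r).im⟩ * ⟨p z,q z⟩‖) hw.le
    have hM : 0 ≤ (-2 * lam r) * (p z ^ 2 + q z ^ 2) * wgt z := by
      have : 0 ≤ -2 * lam r := by linarith
      positivity
    rw [add_mul]
    simp only [Complex.one_re, Complex.one_im, Complex.I_re, Complex.I_im]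
    rw [hk]
    linear_combination hN + hM
  have hmain : ∫ z : Fin n → ℂ, ‖v z‖ ^ 2 * wgt z ≤ ∫ z, ‖dbarOp lam r v z‖ ^ 2 * wgt z := by
    have := integral_mono (iv.add (i1.add i2)) iD hpt
    rw [integral_add' iv (i1.add i2), integral_add' i1 i2, z1, z2] at this
    simpa using this
  refine hmain.trans ?_
  exact Finset.single_le_sum
    (f := fun j => ∫ z : Fin n → ℂ, ‖dbarOp lam j v z‖ ^ 2 * wgt z)
    (fun j _ => integral_nonneg fun z => mul_nonneg (sq_nonneg _) (Real.exp_pos _).le)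
    (Finset.mem_univ r)
end
end

section
/- Let n ≥ 4, d ≥ 1, and let H¹,...,Hᵈ be hermitian n × n complex matrices such that for every ξ ∈ ℝᵈ \ {0} the hermitian matrix ∑_{ℓ=1}^d ξ_ℓ Hℓ has at least 2 positive eigenvalues and at least 2 negative eigenvalues. On ℂⁿ × ℝᵈ with coordinates (z, x) consider the vector fields L̄_j = ∂/∂z̄_j − i ∑_{ℓ=1}^d ∑_{k=1}^n (Hℓ)_{kj} z_k ∂/∂x_ℓ, j = 1,...,n. Then for every smooth compactly supported u : ℂⁿ × ℝᵈ → ℂ, ∫_{ℂⁿ×ℝᵈ} |u|² e^{|z|²} dλ ≤ ∑_{j=1}^n ∫_{ℂⁿ×ℝᵈ} |L̄_j u|² e^{|z|²} dλ. -/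
open MeasureTheory Complex Finset

noncomputable section

/-- Wirtinger derivative `∂u/∂z̄_j` in the `z` variables on `ℂⁿ × ℝᵈ`. -/
def wbarQ {n d : ℕ} (j : Fin n) (u : (Fin n → ℂ) × (Fin d → ℝ) → ℂ)
    (p : (Fin n → ℂ) × (Fin d → ℝ)) : ℂ :=
  (1 / 2 : ℂ) * (fderiv ℝ u p (Pi.single j 1, 0)
    + Complex.I * fderiv ℝ u p (Pi.single j Complex.I, 0))

/-- Wirtinger derivative `∂u/∂z_j` in the `z` variables on `ℂⁿ × ℝᵈ`. -/
def wholQ {n d : ℕ} (j : Fin n) (u : (Fin n → ℂ) × (Fin d → ℝ) → ℂ)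
    (p : (Fin n → ℂ) × (Fin d → ℝ)) : ℂ :=
  (1 / 2 : ℂ) * (fderiv ℝ u p (Pi.single j 1, 0)
    - Complex.I * fderiv ℝ u p (Pi.single j Complex.I, 0))

/-- The derivative `∂u/∂x_ℓ` in the real variables on `ℂⁿ × ℝᵈ`. -/
def dxQ {n d : ℕ} (ℓ : Fin d) (u : (Fin n → ℂ) × (Fin d → ℝ) → ℂ)
    (p : (Fin n → ℂ) × (Fin d → ℝ)) : ℂ :=
  fderiv ℝ u p (0, Pi.single ℓ 1)

/-- The vector field `L̄_j = ∂/∂z̄_j − i ∑_ℓ ∑_k (Hℓ)_{kj} z_k ∂/∂x_ℓ`. -/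
def LbarQ {n d : ℕ} (H : Fin d → Matrix (Fin n) (Fin n) ℂ) (j : Fin n)
    (u : (Fin n → ℂ) × (Fin d → ℝ) → ℂ) (p : (Fin n → ℂ) × (Fin d → ℝ)) : ℂ :=
  wbarQ j u p - Complex.I * ∑ ℓ, ∑ k, H ℓ k j * p.1 k * dxQ ℓ u p

/-- The vector field `L_j = ∂/∂z_j + i ∑_ℓ ∑_k (Hℓ)_{jk} z̄_k ∂/∂x_ℓ`. -/
def LholQ {n d : ℕ} (H : Fin d → Matrix (Fin n) (Fin n) ℂ) (j : Fin n)
    (u : (Fin n → ℂ) × (Fin d → ℝ) → ℂ) (p : (Fin n → ℂ) × (Fin d → ℝ)) : ℂ :=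
  wholQ j u p + Complex.I * ∑ ℓ, ∑ k, H ℓ j k * (starRingEnd ℂ) (p.1 k) * dxQ ℓ u p

/-- The weight `e^{|z|²}`. -/
def wgtQ {n d : ℕ} (p : (Fin n → ℂ) × (Fin d → ℝ)) : ℝ :=
  Real.exp (∑ j, Complex.normSq (p.1 j))

/-- `M` is 2-pseudoconcave: for every `ξ ≠ 0`, the hermitian matrix `∑ ℓ, ξ_ℓ Hℓ`
has at least 2 positive and at least 2 negative eigenvalues (with multiplicity). -/
def TwoPseudoconcave {n d : ℕ} (H : Fin d → Matrix (Fin n) (Fin n) ℂ) : Prop :=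
  ∀ ξ : Fin d → ℝ, ξ ≠ 0 →
    ∀ h : (∑ ℓ, ((ξ ℓ : ℂ)) • H ℓ).IsHermitian,
      2 ≤ (Finset.univ.filter fun i => 0 < h.eigenvalues i).card ∧
      2 ≤ (Finset.univ.filter fun i => h.eigenvalues i < 0).card

section Core
open scoped ContDiff

variable {V : Type*} [NormedAddCommGroup V] [NormedSpace ℝ V] [FiniteDimensional ℝ V]
  [MeasurableSpace V] [BorelSpace V] (μ : Measure V) [μ.IsAddHaarMeasure]

lemma ibp_real (f h : V → ℝ) (hf : ContDiff ℝ 1 f) (hh : ContDiff ℝ 1 h)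
    (hc : HasCompactSupport h) (a : V) :
    ∫ x, f x * fderiv ℝ h x a ∂μ = - ∫ x, fderiv ℝ f x a * h x ∂μ := by
  have h1 : Continuous fun x => fderiv ℝ f x a :=
    (hf.continuous_fderiv one_ne_zero).clm_apply continuous_const
  have h2 : Continuous fun x => fderiv ℝ h x a :=
    (hh.continuous_fderiv one_ne_zero).clm_apply continuous_const
  have h3 : HasCompactSupport fun x => fderiv ℝ h x a := hc.fderiv_apply ℝ a
  apply integral_mul_fderiv_eq_neg_fderiv_mul_of_integrable
  · exact (h1.mul hh.continuous).integrable_of_hasCompactSupport hc.mul_left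
  · exact (hf.continuous.mul h2).integrable_of_hasCompactSupport h3.mul_left
  · exact (hf.continuous.mul hh.continuous).integrable_of_hasCompactSupport hc.mul_left
  · exact fun x _ => (hf.differentiable one_ne_zero).differentiableAt
  · exact fun x _ => (hh.differentiable one_ne_zero).differentiableAt

lemma cross_real (p q : V → ℝ) (hp : ContDiff ℝ 2 p) (hq : ContDiff ℝ 2 q)
    (hc : HasCompactSupport q) (a b : V) :
    ∫ x, fderiv ℝ p x b * fderiv ℝ q x a ∂μ = ∫ x, fderiv ℝ p x a * fderiv ℝ q x b ∂μ := by
  have hb : ContDiff ℝ 1 (fun x => fderiv ℝ p x b) :=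
    (hp.fderiv_right (m := 1) (by norm_num)).clm_apply contDiff_const
  have ha : ContDiff ℝ 1 (fun x => fderiv ℝ p x a) :=
    (hp.fderiv_right (m := 1) (by norm_num)).clm_apply contDiff_const
  rw [ibp_real μ _ q hb (hq.of_le (by norm_num)) hc a,
    ibp_real μ _ q ha (hq.of_le (by norm_num)) hc b]
  congr 1
  apply integral_congr_ae
  filter_upwards with x
  congr 1
  have hd : DifferentiableAt ℝ (fderiv ℝ p) x :=
    ((hp.fderiv_right (m := 1) (by norm_num)).differentiable one_ne_zero).differentiableAt
  have e : ∀ v w : V, fderiv ℝ (fun x => fderiv ℝ p x v) x w = fderiv ℝ (fderiv ℝ p) x w v := by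
    intro v w
    rw [fderiv_clm_apply hd (differentiableAt_const v)]
    simp
  rw [e, e]
  exact (hp.contDiffAt.isSymmSndFDerivAt (by simp)) a b

lemma int_comb (f1 f2 f3 f4 f5 : V → ℝ) (t : ℝ) (h1 : Integrable f1 μ) (h2 : Integrable f2 μ)
    (h3 : Integrable f3 μ) (h4 : Integrable f4 μ) (h5 : Integrable f5 μ) :
    ∫ x, (f1 x + (f2 x - f3 x) - t * (f4 x + f5 x)) ∂μ
      = ∫ x, f1 x ∂μ + (∫ x, f2 x ∂μ - ∫ x, f3 x ∂μ) - t * (∫ x, f4 x ∂μ + ∫ x, f5 x ∂μ) := by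
  have h23 : Integrable (fun x => f2 x - f3 x) μ := h2.sub h3
  have h45 : Integrable (fun x => f4 x + f5 x) μ := h4.add h5
  have h123 : Integrable (fun x => f1 x + (f2 x - f3 x)) μ := h1.add h23
  rw [integral_sub h123 (h45.const_mul t), integral_add h1 h23, integral_sub h2 h3,
    integral_const_mul, integral_add h4 h5]

lemma core_one (g : V → ℂ) (hg : ContDiff ℝ 2 g) (hc : HasCompactSupport g) (a b : V)
    (α β : V →L[ℝ] ℝ) (hα : α a = 1) (hβ : β b = 1) (t : ℝ) :
    2 * t * ∫ x, ‖g x‖ ^ 2 ∂μ ≤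
      ∫ x, ‖(1 / 2 : ℂ) * (fderiv ℝ g x a + I * fderiv ℝ g x b)
        - t * ((α x : ℂ) + I * (β x : ℂ)) * g x‖ ^ 2 ∂μ := by
  have hca : ∀ v, Continuous fun x => fderiv ℝ g x v := fun v =>
    (hg.continuous_fderiv two_ne_zero).clm_apply continuous_const
  have hsa : ∀ v, HasCompactSupport fun x => fderiv ℝ g x v := fun v => hc.fderiv_apply ℝ v
  have hd : ∀ x, DifferentiableAt ℝ g x := fun x => (hg.differentiable two_ne_zero).differentiableAt
  have hgc := hg.continuous
  -- the real and imaginary parts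
  have hpC : ContDiff ℝ 2 (fun x => (g x).re) := reCLM.contDiff.comp hg
  have hqC : ContDiff ℝ 2 (fun x => (g x).im) := imCLM.contDiff.comp hg
  have hpd : ∀ x v, fderiv ℝ (fun x => (g x).re) x v = (fderiv ℝ g x v).re := by
    intro x v
    have := (reCLM.hasFDerivAt.comp x (hd x).hasFDerivAt).fderiv
    exact congrArg (fun L => L v) this
  have hqd : ∀ x v, fderiv ℝ (fun x => (g x).im) x v = (fderiv ℝ g x v).im := by
    intro x v
    have := (imCLM.hasFDerivAt.comp x (hd x).hasFDerivAt).fderiv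
    exact congrArg (fun L => L v) this
  have hpS : HasCompactSupport (fun x => (g x).re) := hc.comp_left (g := Complex.re) rfl
  have hqS : HasCompactSupport (fun x => (g x).im) := hc.comp_left (g := Complex.im) rfl
  have cross := cross_real μ _ _ hpC hqC hqS a b
  simp only [hpd, hqd] at cross
  have hnS : HasCompactSupport (fun x => (g x).re ^ 2 + (g x).im ^ 2) :=
    hc.comp_left (g := fun w : ℂ => w.re ^ 2 + w.im ^ 2) (by simp)
  have hnC : ContDiff ℝ 1 (fun x => (g x).re ^ 2 + (g x).im ^ 2) :=
    ((hpC.pow 2).add (hqC.pow 2)).of_le (by norm_num)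
  have hnd : ∀ x v, fderiv ℝ (fun x => (g x).re ^ 2 + (g x).im ^ 2) x v
      = 2 * ((g x).re * (fderiv ℝ g x v).re + (g x).im * (fderiv ℝ g x v).im) := by
    intro x v
    have h1 := (hpC.differentiable two_ne_zero x).hasFDerivAt
    have h2 := (hqC.differentiable two_ne_zero x).hasFDerivAt
    rw [((h1.pow 2).fun_add (h2.pow 2)).fderiv]
    simp [hpd, hqd]
    ring
  have key : ∀ (γ : V →L[ℝ] ℝ) (v : V), γ v = 1 →
      ∫ x, γ x * (2 * ((g x).re * (fderiv ℝ g x v).re + (g x).im * (fderiv ℝ g x v).im)) ∂μ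
        = - ∫ x, ‖g x‖ ^ 2 ∂μ := by
    intro γ v hv
    have := ibp_real μ γ _ γ.contDiff hnC hnS v
    simp only [hnd, ContinuousLinearMap.fderiv, hv, one_mul] at this
    rw [this]
    congr 2
    ext x
    rw [← Complex.normSq_eq_norm_sq, Complex.normSq_apply]; ring
  have ka := key α a hα
  have kb := key β b hβ
  -- integrability
  have i1 : Integrable (fun x => (fderiv ℝ g x b).re * (fderiv ℝ g x a).im) μ := by
    refine Continuous.integrable_of_hasCompactSupport ?_ ?_
    · have := hca a; have := hca b; fun_prop
    · exact ((hsa a).comp_left (g := Complex.im) rfl).mul_left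
  have i2 : Integrable (fun x => (fderiv ℝ g x a).re * (fderiv ℝ g x b).im) μ := by
    refine Continuous.integrable_of_hasCompactSupport ?_ ?_
    · have := hca a; have := hca b; fun_prop
    · exact ((hsa b).comp_left (g := Complex.im) rfl).mul_left
  have i3 : ∀ (γ : V →L[ℝ] ℝ) (v : V), Integrable (fun x =>
      γ x * (2 * ((g x).re * (fderiv ℝ g x v).re + (g x).im * (fderiv ℝ g x v).im))) μ := by
    intro γ v
    refine Continuous.integrable_of_hasCompactSupport ?_ ?_
    · have := hca v; fun_prop
    · exact ((hpS.mul_right.add hqS.mul_right).mul_left).mul_left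
  have i4 : Integrable (fun x => ‖(1 / 2 : ℂ) * (fderiv ℝ g x a - I * fderiv ℝ g x b)
        + t * ((α x : ℂ) - I * (β x : ℂ)) * g x‖ ^ 2) μ := by
    refine Continuous.integrable_of_hasCompactSupport ?_ ?_
    · have := hca a; have := hca b; fun_prop
    · have : HasCompactSupport (fun x => (1 / 2 : ℂ) * (fderiv ℝ g x a - I * fderiv ℝ g x b)
        + t * ((α x : ℂ) - I * (β x : ℂ)) * g x) :=
        (HasCompactSupport.mul_left ((hsa a).sub (hsa b).mul_left)).add hc.mul_left
      exact this.comp_left (g := fun w : ℂ => ‖w‖ ^ 2) (by simp)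
  have pt : ∀ x, ‖(1 / 2 : ℂ) * (fderiv ℝ g x a + I * fderiv ℝ g x b)
        - t * ((α x : ℂ) + I * (β x : ℂ)) * g x‖ ^ 2
      = ‖(1 / 2 : ℂ) * (fderiv ℝ g x a - I * fderiv ℝ g x b)
        + t * ((α x : ℂ) - I * (β x : ℂ)) * g x‖ ^ 2
        + ((fderiv ℝ g x b).re * (fderiv ℝ g x a).im - (fderiv ℝ g x a).re * (fderiv ℝ g x b).im)
        - t * (α x * (2 * ((g x).re * (fderiv ℝ g x a).re + (g x).im * (fderiv ℝ g x a).im))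
          + β x * (2 * ((g x).re * (fderiv ℝ g x b).re + (g x).im * (fderiv ℝ g x b).im))) := by
    intro x
    rw [← Complex.normSq_eq_norm_sq, ← Complex.normSq_eq_norm_sq, Complex.normSq_apply,
      Complex.normSq_apply]
    simp
    ring
  simp_rw [pt]
  rw [int_comb μ _ _ _ _ _ t i4 i1 i2 (i3 α a) (i3 β b), ka, kb, cross]
  have : 0 ≤ ∫ x, ‖(1 / 2 : ℂ) * (fderiv ℝ g x a - I * fderiv ℝ g x b)
        + t * ((α x : ℂ) - I * (β x : ℂ)) * g x‖ ^ 2 ∂μ :=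
    integral_nonneg fun x => by positivity
  linarith

end Core
section CoreTwo
open scoped ContDiff

/-- half of `|z|²`. -/
def halfSq {n : ℕ} (z : Fin n → ℂ) : ℝ := ∑ j, (1 / 2 : ℝ) * ((z j).re ^ 2 + (z j).im ^ 2)

lemma halfSq_hasFDerivAt {n : ℕ} (z : Fin n → ℂ) : ∃ L : (Fin n → ℂ) →L[ℝ] ℝ,
    HasFDerivAt (halfSq (n := n)) L z ∧
      ∀ v, L v = ∑ j, ((z j).re * (v j).re + (z j).im * (v j).im) := by
  have hre : ∀ j, HasFDerivAt (fun z : Fin n → ℂ => (z j).re)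
      (reCLM ∘L (ContinuousLinearMap.proj (R := ℝ) (φ := fun _ : Fin n => ℂ) j)) z := fun j =>
    (reCLM ∘L (ContinuousLinearMap.proj (R := ℝ) (φ := fun _ : Fin n => ℂ) j)).hasFDerivAt
  have him : ∀ j, HasFDerivAt (fun z : Fin n → ℂ => (z j).im)
      (imCLM ∘L (ContinuousLinearMap.proj (R := ℝ) (φ := fun _ : Fin n => ℂ) j)) z := fun j =>
    (imCLM ∘L (ContinuousLinearMap.proj (R := ℝ) (φ := fun _ : Fin n => ℂ) j)).hasFDerivAt
  refine ⟨_, HasFDerivAt.fun_sum (u := Finset.univ) (fun j _ =>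
    (((hre j).pow 2).fun_add ((him j).pow 2)).const_mul (1 / 2 : ℝ)), ?_⟩
  intro v
  simp only [ContinuousLinearMap.sum_apply]
  refine Finset.sum_congr rfl fun j _ => ?_
  simp
  ring

lemma halfSq_contDiff {n : ℕ} : ContDiff ℝ 2 (halfSq (n := n)) := by
  unfold halfSq
  refine ContDiff.sum fun j _ => ?_
  have hre : ContDiff ℝ 2 (fun z : Fin n → ℂ => (z j).re) :=
    (reCLM ∘L (ContinuousLinearMap.proj (R := ℝ) (φ := fun _ : Fin n => ℂ) j)).contDiff
  have him : ContDiff ℝ 2 (fun z : Fin n → ℂ => (z j).im) :=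
    (imCLM ∘L (ContinuousLinearMap.proj (R := ℝ) (φ := fun _ : Fin n => ℂ) j)).contDiff
  exact contDiff_const.mul ((hre.pow 2).add (him.pow 2))

lemma exp_halfSq_sq {n : ℕ} (z : Fin n → ℂ) :
    Real.exp (halfSq z) ^ 2 = Real.exp (∑ j, Complex.normSq (z j)) := by
  rw [← Real.exp_nat_mul]
  congr 1
  unfold halfSq
  rw [Finset.mul_sum]
  refine Finset.sum_congr rfl fun j _ => ?_
  rw [Complex.normSq_apply]; push_cast; ring

lemma core_two {n : ℕ} (G : (Fin n → ℂ) → ℂ) (hG : ContDiff ℝ 2 G) (hc : HasCompactSupport G)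
    (c : Fin n → ℂ) (hc1 : ∑ j, Complex.normSq (c j) = 1) (m : ℝ) (hm : m ≤ 0) :
    ∫ z, ‖G z‖ ^ 2 * Real.exp (∑ j, Complex.normSq (z j)) ≤
      ∫ z, ‖(1 / 2 : ℂ) * (fderiv ℝ G z (fun j => (starRingEnd ℂ) (c j))
          + I * fderiv ℝ G z (fun j => I * (starRingEnd ℂ) (c j)))
        + m * (∑ k, c k * z k) * G z‖ ^ 2 * Real.exp (∑ j, Complex.normSq (z j)) := by
  set a : Fin n → ℂ := fun j => (starRingEnd ℂ) (c j) with ha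
  set b : Fin n → ℂ := fun j => I * (starRingEnd ℂ) (c j) with hb
  let S : (Fin n → ℂ) →L[ℝ] ℂ :=
    ∑ k, (c k) • (ContinuousLinearMap.proj (R := ℝ) (φ := fun _ : Fin n => ℂ) k)
  have hS : ∀ z, S z = ∑ k, c k * z k := by
    intro z; simp [S, ContinuousLinearMap.sum_apply]
  let α : (Fin n → ℂ) →L[ℝ] ℝ := reCLM ∘L S
  let β : (Fin n → ℂ) →L[ℝ] ℝ := imCLM ∘L S
  have hα : α a = 1 := by
    simp only [α, ContinuousLinearMap.comp_apply, hS, ha, Complex.mul_conj, reCLM_apply]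
    rw [← Complex.ofReal_sum, hc1]; simp
  have hβ : β b = 1 := by
    have : ∀ k, c k * (I * (starRingEnd ℂ) (c k)) = I * (Complex.normSq (c k) : ℂ) := by
      intro k; rw [← Complex.mul_conj]; ring
    simp only [β, ContinuousLinearMap.comp_apply, hS, hb, this, imCLM_apply]
    rw [← Finset.mul_sum, ← Complex.ofReal_sum, hc1]; simp
  have hsum : ∀ z, (α z : ℂ) + I * (β z : ℂ) = ∑ k, c k * z k := by
    intro z
    rw [← hS, mul_comm I]
    exact Complex.re_add_im (S z)
  let g : (Fin n → ℂ) → ℂ := fun z => (Real.exp (halfSq z) : ℂ) * G z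
  have hgC : ContDiff ℝ 2 g :=
    (ofRealCLM.contDiff.comp (Real.contDiff_exp.comp halfSq_contDiff)).mul hG
  have hgS : HasCompactSupport g := hc.mul_left
  have hgd : ∀ z v, fderiv ℝ g z v = (Real.exp (halfSq z) : ℂ) * (fderiv ℝ G z v
      + ((∑ j, ((z j).re * (v j).re + (z j).im * (v j).im) : ℝ) : ℂ) * G z) := by
    intro z v
    obtain ⟨L, hL, hLv⟩ := halfSq_hasFDerivAt z
    have h1 : HasFDerivAt (fun z => (Real.exp (halfSq z) : ℂ)) _ z :=
      ofRealCLM.hasFDerivAt.comp z hL.exp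
    have h2 := h1.mul (hG.differentiable two_ne_zero z).hasFDerivAt
    have h3 : fderiv ℝ g z = _ := h2.fderiv
    rw [h3]
    simp [hLv]
    ring
  have hda : ∀ z : Fin n → ℂ, (∑ j, ((z j).re * (a j).re + (z j).im * (a j).im)) = α z := by
    intro z
    simp only [α, ContinuousLinearMap.comp_apply, hS, reCLM_apply, Complex.re_sum]
    refine Finset.sum_congr rfl fun j _ => ?_
    simp [ha]; ring
  have hdb : ∀ z : Fin n → ℂ, (∑ j, ((z j).re * (b j).re + (z j).im * (b j).im)) = β z := by
    intro z
    simp only [β, ContinuousLinearMap.comp_apply, hS, imCLM_apply, Complex.im_sum]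
    refine Finset.sum_congr rfl fun j _ => ?_
    simp [hb]; ring
  have main := core_one volume g hgC hgS a b α β hα hβ (1 / 2 - m)
  have e1 : ∀ z, ‖g z‖ ^ 2 = ‖G z‖ ^ 2 * Real.exp (∑ j, Complex.normSq (z j)) := by
    intro z
    simp only [g, norm_mul, mul_pow, ← exp_halfSq_sq, Complex.norm_real, Real.norm_eq_abs, sq_abs]
    ring
  have e2 : ∀ z, ‖(1 / 2 : ℂ) * (fderiv ℝ g z a + I * fderiv ℝ g z b)
        - ((1 / 2 - m : ℝ) : ℂ) * ((α z : ℂ) + I * (β z : ℂ)) * g z‖ ^ 2 =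
      ‖(1 / 2 : ℂ) * (fderiv ℝ G z a + I * fderiv ℝ G z b)
        + m * (∑ k, c k * z k) * G z‖ ^ 2 * Real.exp (∑ j, Complex.normSq (z j)) := by
    intro z
    rw [hgd, hgd, hda, hdb, ← hsum, ← exp_halfSq_sq]
    have : (1 / 2 : ℂ) * ((Real.exp (halfSq z) : ℂ) * (fderiv ℝ G z a + (α z : ℂ) * G z)
        + I * ((Real.exp (halfSq z) : ℂ) * (fderiv ℝ G z b + (β z : ℂ) * G z)))
        - ((1 / 2 - m : ℝ) : ℂ) * ((α z : ℂ) + I * (β z : ℂ)) * g z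
        = (Real.exp (halfSq z) : ℂ) * ((1 / 2 : ℂ) * (fderiv ℝ G z a + I * fderiv ℝ G z b)
        + m * ((α z : ℂ) + I * (β z : ℂ)) * G z) := by
      simp only [g]; push_cast; ring
    rw [this, norm_mul, mul_pow, Complex.norm_real, Real.norm_eq_abs, sq_abs]
    ring
  simp_rw [e1, e2] at main
  have hnn : 0 ≤ ∫ z, ‖G z‖ ^ 2 * Real.exp (∑ j, Complex.normSq (z j)) :=
    integral_nonneg fun z => by positivity
  nlinarith

end CoreTwo
section PartialFourier
open scoped ContDiff

variable {n d : ℕ}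

/-- the character `x ↦ e^{-2π i ξ·x}`. -/
def chrQ (ξ x : Fin d → ℝ) : ℂ := cexp (-(2 * Real.pi * I * ((∑ l, ξ l * x l : ℝ) : ℂ)))

/-- partial Fourier transform in the real variables. -/
def PFQ (ξ : Fin d → ℝ) (v : (Fin n → ℂ) × (Fin d → ℝ) → ℂ) (z : Fin n → ℂ) : ℂ :=
  ∫ x, chrQ ξ x * v (z, x)

lemma chrQ_cont : Continuous fun q : (Fin d → ℝ) × (Fin d → ℝ) => chrQ q.1 q.2 := by
  unfold chrQ
  fun_prop

lemma chrQ_cont2 (ξ : Fin d → ℝ) : Continuous (chrQ ξ) := by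
  unfold chrQ
  fun_prop

lemma chrQ_norm (ξ x : Fin d → ℝ) : ‖chrQ ξ x‖ = 1 := by
  have : -(2 * Real.pi * I * ((∑ l, ξ l * x l : ℝ) : ℂ))
      = ((-(2 * Real.pi * (∑ l, ξ l * x l)) : ℝ) : ℂ) * I := by push_cast; ring
  rw [chrQ, this, Complex.norm_exp_ofReal_mul_I]

lemma supp_snd {v : (Fin n → ℂ) × (Fin d → ℝ) → ℂ} (z : Fin n → ℂ) (x : Fin d → ℝ)
    (hx : x ∉ Prod.snd '' tsupport v) : v (z, x) = 0 := by
  by_contra h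
  exact hx ⟨(z, x), subset_tsupport _ h, rfl⟩

lemma supp_fst {v : (Fin n → ℂ) × (Fin d → ℝ) → ℂ} (z : Fin n → ℂ) (x : Fin d → ℝ)
    (hx : z ∉ Prod.fst '' tsupport v) : v (z, x) = 0 := by
  by_contra h
  exact hx ⟨(z, x), subset_tsupport _ h, rfl⟩

lemma slice_hcs {v : (Fin n → ℂ) × (Fin d → ℝ) → ℂ} (hc : HasCompactSupport v) (z : Fin n → ℂ) :
    HasCompactSupport fun x => v (z, x) :=
  HasCompactSupport.intro (hc.isCompact.image continuous_snd) fun x hx => supp_snd z x hx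

lemma PFQ_cont {v : (Fin n → ℂ) × (Fin d → ℝ) → ℂ} (hv : Continuous v)
    (hc : HasCompactSupport v) :
    Continuous fun q : (Fin d → ℝ) × (Fin n → ℂ) => PFQ q.1 v q.2 := by
  rw [← continuousOn_univ]
  refine continuousOn_integral_of_compact_support
    (f := fun (q : (Fin d → ℝ) × (Fin n → ℂ)) (x : Fin d → ℝ) => chrQ q.1 x * v (q.2, x))
    (hc.isCompact.image continuous_snd) ?_ ?_
  · apply Continuous.continuousOn
    have h1 : Continuous fun p : ((Fin d → ℝ) × (Fin n → ℂ)) × (Fin d → ℝ) =>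
      chrQ p.1.1 p.2 := chrQ_cont.comp (by fun_prop : Continuous
        fun p : ((Fin d → ℝ) × (Fin n → ℂ)) × (Fin d → ℝ) => (p.1.1, p.2))
    exact h1.mul (hv.comp (by fun_prop))
  · intro q x _ hx
    rw [supp_snd _ _ hx, mul_zero]

lemma PFQ_hcs {v : (Fin n → ℂ) × (Fin d → ℝ) → ℂ}
    (hc : HasCompactSupport v) (ξ : Fin d → ℝ) : HasCompactSupport (PFQ ξ v) := by
  refine HasCompactSupport.intro (hc.isCompact.image continuous_fst) fun z hz => ?_
  simp [PFQ, supp_fst z _ hz]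

lemma PFQ_contDiff {v : (Fin n → ℂ) × (Fin d → ℝ) → ℂ} (hv : ContDiff ℝ ∞ v)
    (hc : HasCompactSupport v) (ξ : Fin d → ℝ) : ContDiff ℝ 2 (PFQ ξ v) := by
  rw [← contDiffOn_univ]
  have := contDiffOn_convolution_right_with_param_comp (𝕜 := ℝ) (n := 2) (μ := volume)
    (ContinuousLinearMap.mul ℝ ℂ) (s := (Set.univ : Set (Fin n → ℂ)))
    (v := fun _ => (0 : Fin d → ℝ)) contDiffOn_const (f := chrQ ξ)
    (g := fun z x => v (z, -x)) (k := (fun x => -x) '' (Prod.snd '' tsupport v)) isOpen_univ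
    ((hc.isCompact.image continuous_snd).image continuous_neg) ?_
    (chrQ_cont2 ξ).locallyIntegrable ?_
  · refine ContDiffOn.congr (ContDiffOn.of_le this (le_of_eq (by norm_cast))) fun z _ => ?_
    simp [PFQ, MeasureTheory.convolution]
  · intro z x _ hx
    refine supp_snd z (-x) fun h => hx ⟨-x, h, by simp⟩
  · apply ContDiff.contDiffOn
    have : ContDiff ℝ 2 v := by exact_mod_cast contDiff_infty.1 hv 2
    exact this.comp (contDiff_fst.prodMk contDiff_snd.neg)

lemma PFQ_fderiv {v : (Fin n → ℂ) × (Fin d → ℝ) → ℂ} (hv : ContDiff ℝ ∞ v)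
    (hc : HasCompactSupport v) (ξ : Fin d → ℝ) (z a : Fin n → ℂ) :
    fderiv ℝ (PFQ ξ v) z a = PFQ ξ (fun p => fderiv ℝ v p (a, 0)) z := by
  have hk : IsCompact (Prod.snd '' tsupport v) := hc.isCompact.image continuous_snd
  have hdc : Continuous (fderiv ℝ v) := hv.continuous_fderiv (by simp)
  obtain ⟨C, hC⟩ := (hc.fderiv ℝ).exists_bound_of_continuous hdc
  let J : (Fin n → ℂ) →L[ℝ] (Fin n → ℂ) × (Fin d → ℝ) :=
    ContinuousLinearMap.inl ℝ (Fin n → ℂ) (Fin d → ℝ)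
  let F' : (Fin n → ℂ) → (Fin d → ℝ) → ((Fin n → ℂ) →L[ℝ] ℂ) :=
    fun z x => chrQ ξ x • (fderiv ℝ v (z, x) ∘L J)
  have hF'c : Continuous (F' z) := by
    refine (chrQ_cont2 ξ).smul ?_
    exact (hdc.comp (by fun_prop : Continuous fun x : Fin d → ℝ => (z, x))).clm_comp
      continuous_const
  have hz : ∀ z x, x ∉ Prod.snd '' tsupport v → fderiv ℝ v (z, x) = 0 := by
    intro z x hx
    by_contra h
    exact hx ⟨(z, x), support_fderiv_subset ℝ h, rfl⟩
  have hF'i : Integrable (F' z) := by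
    refine hF'c.integrable_of_hasCompactSupport (HasCompactSupport.intro hk fun x hx => ?_)
    refine ContinuousLinearMap.ext fun a => ?_
    change chrQ ξ x * (fderiv ℝ v (z, x) (J a)) = 0
    rw [hz z x hx]
    simp
  have main : HasFDerivAt (PFQ ξ v) (∫ x, F' z x) z := by
    refine hasFDerivAt_integral_of_dominated_of_fderiv_le
      (bound := (Prod.snd '' tsupport v).indicator fun _ => C * ‖J‖)
      (s := Set.univ) Filter.univ_mem ?_ ?_ hF'c.aestronglyMeasurable ?_ ?_ ?_
    · refine Filter.Eventually.of_forall fun z => ?_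
      exact ((chrQ_cont2 ξ).mul (hv.continuous.comp (by fun_prop))).aestronglyMeasurable
    · exact ((chrQ_cont2 ξ).mul (hv.continuous.comp (by fun_prop))).integrable_of_hasCompactSupport
        (slice_hcs hc z).mul_left
    · refine Filter.Eventually.of_forall fun x z _ => ?_
      by_cases hx : x ∈ Prod.snd '' tsupport v
      · rw [Set.indicator_of_mem hx]
        simp only [F']
        rw [norm_smul, chrQ_norm, one_mul]
        refine (ContinuousLinearMap.opNorm_comp_le _ _).trans ?_
        gcongr
        exact hC _
      · rw [Set.indicator_of_notMem hx]
        simp [F', hz z x hx]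
    · exact (integrable_indicator_iff hk.measurableSet).2
        (integrableOn_const hk.measure_ne_top)
    · refine Filter.Eventually.of_forall fun x z _ => ?_
      have h1 : HasFDerivAt (fun z : Fin n → ℂ => (z, x)) J z := hasFDerivAt_prodMk_left z x
      have h2 : HasFDerivAt v (fderiv ℝ v (z, x)) (z, x) :=
        (hv.differentiable (by simp) (z, x)).hasFDerivAt
      exact (h2.comp z h1).const_mul (chrQ ξ x)
  rw [main.fderiv, ContinuousLinearMap.integral_apply hF'i]
  rfl

lemma PFQ_dx {v : (Fin n → ℂ) × (Fin d → ℝ) → ℂ} (hv : ContDiff ℝ ∞ v)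
    (hc : HasCompactSupport v) (ξ : Fin d → ℝ) (z : Fin n → ℂ) (l : Fin d) :
    PFQ ξ (dxQ l v) z = 2 * Real.pi * I * ξ l * PFQ ξ v z := by
  have hdc : Continuous (fderiv ℝ v) := hv.continuous_fderiv (by simp)
  have hsd : ∀ x, fderiv ℝ (fun x => v (z, x)) x (Pi.single l 1) = dxQ l v (z, x) := by
    intro x
    have h1 : HasFDerivAt (fun x : Fin d → ℝ => (z, x))
      (ContinuousLinearMap.inr ℝ (Fin n → ℂ) (Fin d → ℝ)) x := hasFDerivAt_prodMk_right z x
    have h2 : HasFDerivAt v (fderiv ℝ v (z, x)) (z, x) :=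
        (hv.differentiable (by simp) (z, x)).hasFDerivAt
    have h3 := (h2.comp x h1).fderiv
    exact congrArg (fun L => L (Pi.single l 1)) h3
  have hcd : ∀ x, HasFDerivAt (chrQ ξ) (chrQ ξ x • (-(2 * Real.pi * I : ℂ) • (ofRealCLM ∘L
      (∑ l, ξ l • ContinuousLinearMap.proj (R := ℝ) (φ := fun _ : Fin d => ℝ) l)))) x := by
    intro x
    have h1 : HasFDerivAt (fun x : Fin d → ℝ => ((∑ l, ξ l * x l : ℝ) : ℂ)) (ofRealCLM ∘L
      (∑ l, ξ l • ContinuousLinearMap.proj (R := ℝ) (φ := fun _ : Fin d => ℝ) l)) x := by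
      have e : (fun x : Fin d → ℝ => ((∑ l, ξ l * x l : ℝ) : ℂ)) = ⇑(ofRealCLM ∘L (∑ l,
          ξ l • ContinuousLinearMap.proj (R := ℝ) (φ := fun _ : Fin d => ℝ) l)) := by
        ext x
        simp
      rw [e]
      exact ContinuousLinearMap.hasFDerivAt _
    have h2 := (h1.const_mul (-(2 * Real.pi * I : ℂ))).cexp
    unfold chrQ
    simpa only [neg_mul] using h2
  have hcd' : ∀ x, fderiv ℝ (chrQ ξ) x (Pi.single l 1) = -(2 * Real.pi * I * ξ l) * chrQ ξ x := by
    intro x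
    rw [(hcd x).fderiv]
    simp [Pi.single_apply]
    ring
  have hsc : Continuous fun x : Fin d → ℝ => v (z, x) := hv.continuous.comp (by fun_prop)
  have hscs := slice_hcs hc z
  have hdxc : Continuous fun x : Fin d → ℝ => dxQ l v (z, x) := by
    unfold dxQ
    exact (hdc.comp (by fun_prop)).clm_apply continuous_const
  have hdxs : HasCompactSupport fun x : Fin d → ℝ => dxQ l v (z, x) :=
    slice_hcs (hc.fderiv_apply ℝ _) z
  have ibp := integral_mul_fderiv_eq_neg_fderiv_mul_of_integrable (μ := volume)
    (f := chrQ ξ) (g := fun x => v (z, x)) (v := Pi.single l 1) ?_ ?_ ?_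
    (fun x _ => (hcd x).differentiableAt)
    (fun x _ => ((hv.differentiable (by simp)).comp
      (by fun_prop : Differentiable ℝ fun x : Fin d → ℝ => (z, x))).differentiableAt)
  · simp only [hsd, hcd'] at ibp
    unfold PFQ
    rw [ibp, ← integral_neg, ← integral_const_mul]
    congr 1
    ext x
    ring
  · simp only [hcd']
    exact ((continuous_const.mul (chrQ_cont2 ξ)).mul hsc).integrable_of_hasCompactSupport
      hscs.mul_left
  · simp only [hsd]
    exact ((chrQ_cont2 ξ).mul hdxc).integrable_of_hasCompactSupport hdxs.mul_left
  · exact ((chrQ_cont2 ξ).mul hsc).integrable_of_hasCompactSupport hscs.mul_left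

lemma PFQ_plancherel {v : (Fin n → ℂ) × (Fin d → ℝ) → ℂ} (hv : ContDiff ℝ ∞ v)
    (hc : HasCompactSupport v) (z : Fin n → ℂ) :
    ∫⁻ ξ : Fin d → ℝ, ENNReal.ofReal (‖PFQ ξ v z‖ ^ 2)
      = ∫⁻ x : Fin d → ℝ, ENNReal.ofReal (‖v (z, x)‖ ^ 2) := by
  let f : EuclideanSpace ℝ (Fin d) → ℂ := fun x => v (z, x.ofLp)
  have hfC : ContDiff ℝ ∞ f := hv.comp (contDiff_const.prodMk
    (PiLp.continuousLinearEquiv 2 ℝ (fun _ : Fin d => ℝ)).contDiff)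
  have hfS : HasCompactSupport f := (slice_hcs hc z).comp_homeomorph
    (PiLp.continuousLinearEquiv 2 ℝ (fun _ : Fin d => ℝ)).toHomeomorph
  let s := hfS.toSchwartzMap hfC
  have hF : ∀ ξ : EuclideanSpace ℝ (Fin d), FourierTransform.fourier s ξ = PFQ ξ.ofLp v z := by
    intro ξ
    rw [SchwartzMap.fourier_coe, Real.fourier_eq', PFQ,
      ← (PiLp.volume_preserving_ofLp (Fin d)).integral_comp
        (MeasurableEquiv.toLp 2 (Fin d → ℝ)).symm.measurableEmbedding]
    congr 1
    ext x
    simp only [smul_eq_mul, chrQ, s, HasCompactSupport.toSchwartzMap, f]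
    congr 2
    simp [PiLp.inner_apply]
    ring
  have pl := SchwartzMap.integral_norm_sq_fourier s
  have hI : ∀ s : SchwartzMap (EuclideanSpace ℝ (Fin d)) ℂ, Integrable (fun x => ‖s x‖ ^ 2) := by
    intro s
    have := (s.memLp 2 volume).integrable_norm_pow (by norm_num)
    simpa using this
  have pl2 : ∫⁻ ξ, ENNReal.ofReal (‖FourierTransform.fourier s ξ‖ ^ 2)
      = ∫⁻ x, ENNReal.ofReal (‖s x‖ ^ 2) := by
    rw [← ofReal_integral_eq_lintegral_ofReal (hI _) (Filter.Eventually.of_forall fun _ => by positivity),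
      ← ofReal_integral_eq_lintegral_ofReal (hI _) (Filter.Eventually.of_forall fun _ => by positivity), pl]
  simp only [hF] at pl2
  rw [← (PiLp.volume_preserving_ofLp (Fin d)).lintegral_comp_emb
        (MeasurableEquiv.toLp 2 (Fin d → ℝ)).symm.measurableEmbedding,
    ← (PiLp.volume_preserving_ofLp (Fin d)).lintegral_comp_emb
        (MeasurableEquiv.toLp 2 (Fin d → ℝ)).symm.measurableEmbedding, pl2]
  rfl

end PartialFourier
section Final
open scoped ContDiff

variable {n d : ℕ}

lemma exists_dir (hn : 4 ≤ n) (H : Fin d → Matrix (Fin n) (Fin n) ℂ)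
    (hH : ∀ l, (H l).IsHermitian) (hpc : TwoPseudoconcave H) (η : Fin d → ℝ) :
    ∃ (c : Fin n → ℂ) (m : ℝ), ∑ j, Complex.normSq (c j) = 1 ∧ m ≤ 0 ∧
      ∀ k, ∑ j, (∑ l, (η l : ℂ) * H l k j) * c j = m * c k := by
  by_cases hη : η = 0
  · refine ⟨Pi.single ⟨0, by omega⟩ 1, 0, ?_, le_rfl, ?_⟩
    · simp [Pi.single_apply, apply_ite Complex.normSq]
    · intro k; simp [hη]
  have h : (∑ l, ((η l : ℂ)) • H l).IsHermitian := by
    unfold Matrix.IsHermitian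
    rw [Matrix.conjTranspose_sum]
    refine Finset.sum_congr rfl fun l _ => ?_
    rw [Matrix.conjTranspose_smul, (hH l).eq]
    simp
  obtain ⟨-, h2⟩ := hpc η hη h
  obtain ⟨i, hi⟩ := Finset.card_pos.1 (lt_of_lt_of_le two_pos h2)
  have hi' : h.eigenvalues i < 0 := (Finset.mem_filter.1 hi).2
  refine ⟨(h.eigenvectorBasis i).ofLp, h.eigenvalues i, ?_, hi'.le, ?_⟩
  · have := h.eigenvectorBasis.orthonormal.1 i
    rw [EuclideanSpace.norm_eq, Real.sqrt_eq_one] at this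
    simpa [Complex.normSq_eq_norm_sq] using this
  · intro k
    have := congrFun (h.mulVec_eigenvectorBasis i) k
    simp only [Matrix.mulVec, dotProduct, Matrix.sum_apply, Matrix.smul_apply, smul_eq_mul] at this
    rw [this]
    simp

lemma wbarQ_contDiff {u : (Fin n → ℂ) × (Fin d → ℝ) → ℂ} (hu : ContDiff ℝ ∞ u)
    (v : (Fin n → ℂ) × (Fin d → ℝ)) : ContDiff ℝ ∞ (fun p => fderiv ℝ u p v) :=
  (hu.fderiv_right (m := ∞) (by simp)).clm_apply contDiff_const

lemma LbarQ_contDiff (H : Fin d → Matrix (Fin n) (Fin n) ℂ) (j : Fin n)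
    {u : (Fin n → ℂ) × (Fin d → ℝ) → ℂ} (hu : ContDiff ℝ ∞ u) :
    ContDiff ℝ ∞ (LbarQ H j u) := by
  unfold LbarQ wbarQ dxQ
  have hp : ∀ k, ContDiff ℝ ∞ (fun p : (Fin n → ℂ) × (Fin d → ℝ) => p.1 k) := fun k =>
    ((ContinuousLinearMap.proj (R := ℝ) (φ := fun _ : Fin n => ℂ) k) ∘L
      ContinuousLinearMap.fst ℝ (Fin n → ℂ) (Fin d → ℝ)).contDiff
  refine (contDiff_const.mul ((wbarQ_contDiff hu _).add
    (contDiff_const.mul (wbarQ_contDiff hu _)))).sub (contDiff_const.mul ?_)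
  refine ContDiff.sum fun l _ => ContDiff.sum fun k _ => ?_
  exact (contDiff_const.mul (hp k)).mul (wbarQ_contDiff hu _)

lemma LbarQ_hcs (H : Fin d → Matrix (Fin n) (Fin n) ℂ) (j : Fin n)
    {u : (Fin n → ℂ) × (Fin d → ℝ) → ℂ} (hc : HasCompactSupport u) :
    HasCompactSupport (LbarQ H j u) := by
  refine (hc.fderiv ℝ).mono' ?_
  intro p hp
  by_contra h
  apply hp
  have : fderiv ℝ u p = 0 := image_eq_zero_of_notMem_tsupport h
  simp [LbarQ, wbarQ, dxQ, this]

lemma PFQ_Lbar (H : Fin d → Matrix (Fin n) (Fin n) ℂ) (j : Fin n)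
    {u : (Fin n → ℂ) × (Fin d → ℝ) → ℂ} (hu : ContDiff ℝ ∞ u) (hc : HasCompactSupport u)
    (ξ : Fin d → ℝ) (z : Fin n → ℂ) :
    PFQ ξ (LbarQ H j u) z = (1 / 2 : ℂ) * (fderiv ℝ (PFQ ξ u) z (Pi.single j 1)
        + I * fderiv ℝ (PFQ ξ u) z (Pi.single j I))
      + (∑ k, (∑ l, ((2 * Real.pi * ξ l : ℝ) : ℂ) * H l k j) * z k) * PFQ ξ u z := by
  have hIntg : ∀ v, Integrable (fun x : Fin d → ℝ => chrQ ξ x * fderiv ℝ u (z, x) v) := by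
    intro v
    exact ((chrQ_cont2 ξ).mul ((wbarQ_contDiff hu v).continuous.comp
      (by fun_prop))).integrable_of_hasCompactSupport
      (slice_hcs (hc.fderiv_apply ℝ v) z).mul_left
  have hdx := PFQ_dx hu hc ξ z
  rw [PFQ_fderiv hu hc, PFQ_fderiv hu hc]
  have e : ∀ x, chrQ ξ x * LbarQ H j u (z, x) =
      (1 / 2 : ℂ) * (chrQ ξ x * fderiv ℝ u (z, x) (Pi.single j 1, 0)
        + I * (chrQ ξ x * fderiv ℝ u (z, x) (Pi.single j I, 0)))
      - I * ∑ l, ∑ k, H l k j * z k * (chrQ ξ x * dxQ l u (z, x)) := by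
    intro x
    simp only [LbarQ, wbarQ, mul_sub, Finset.mul_sum]
    congr 1
    · ring
    · refine Finset.sum_congr rfl fun l _ => Finset.sum_congr rfl fun k _ => ?_
      ring
  have i1 : Integrable (fun x : Fin d → ℝ => I * (chrQ ξ x * fderiv ℝ u (z, x) (Pi.single j I, 0))) :=
    (hIntg _).const_mul I
  have i2 : Integrable (fun x : Fin d → ℝ =>
      (1 / 2 : ℂ) * (chrQ ξ x * fderiv ℝ u (z, x) (Pi.single j 1, 0)
        + I * (chrQ ξ x * fderiv ℝ u (z, x) (Pi.single j I, 0)))) :=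
    ((hIntg _).add i1).const_mul _
  have i3 : ∀ l k, Integrable (fun x : Fin d → ℝ => H l k j * z k * (chrQ ξ x * dxQ l u (z, x))) :=
    fun l k => (hIntg (0, Pi.single l 1)).const_mul _
  have i4 : ∀ l, Integrable (fun x : Fin d → ℝ =>
      ∑ k, H l k j * z k * (chrQ ξ x * dxQ l u (z, x))) :=
    fun l => integrable_finsetSum _ fun k _ => i3 l k
  have i5 : Integrable (fun x : Fin d → ℝ =>
      I * ∑ l, ∑ k, H l k j * z k * (chrQ ξ x * dxQ l u (z, x))) :=
    (integrable_finsetSum _ fun l _ => i4 l).const_mul I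
  have e2 : PFQ ξ (LbarQ H j u) z = ∫ x, chrQ ξ x * LbarQ H j u (z, x) := rfl
  rw [e2]
  simp_rw [e]
  rw [integral_sub i2 i5, integral_const_mul, integral_add (hIntg _) i1, integral_const_mul,
    integral_const_mul, integral_finsetSum _ (fun l _ => i4 l)]
  simp_rw [integral_finsetSum _ (fun k _ => i3 _ k), integral_const_mul]
  have e3 : ∀ l, ∫ x, chrQ ξ x * dxQ l u (z, x) = 2 * Real.pi * I * ξ l * PFQ ξ u z := hdx
  simp_rw [e3]
  rw [sub_eq_add_neg]
  congr 1
  rw [Finset.sum_comm, Finset.mul_sum, Finset.sum_mul, ← Finset.sum_neg_distrib]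
  refine Finset.sum_congr rfl fun k _ => ?_
  rw [Finset.mul_sum, Finset.sum_mul, Finset.sum_mul, ← Finset.sum_neg_distrib]
  refine Finset.sum_congr rfl fun l _ => ?_
  push_cast
  linear_combination (-(H l k j * z k * 2 * Real.pi * ξ l * PFQ ξ u z)) * Complex.I_sq

lemma dir_sum (A : (Fin n → ℂ) →L[ℝ] ℂ) (c : Fin n → ℂ) :
    ∑ j, c j * (A (Pi.single j 1) + I * A (Pi.single j I)) =
      A (fun j => (starRingEnd ℂ) (c j)) + I * A (fun j => I * (starRingEnd ℂ) (c j)) := by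
  have h : ∀ w : Fin n → ℂ, A w = ∑ j, (((w j).re : ℂ) * A (Pi.single j 1)
      + ((w j).im : ℂ) * A (Pi.single j I)) := by
    intro w
    have : w = ∑ j, ((w j).re • (Pi.single j 1 : Fin n → ℂ)
        + (w j).im • (Pi.single j I : Fin n → ℂ)) := by
      ext k
      simp [Finset.sum_apply, Pi.single_apply, Finset.sum_add_distrib, Complex.re_add_im]
    conv_lhs => rw [this]
    simp [map_sum, map_add, map_smul]
  rw [h (fun j => (starRingEnd ℂ) (c j)), h (fun j => I * (starRingEnd ℂ) (c j)),
    Finset.mul_sum, ← Finset.sum_add_distrib]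
  refine Finset.sum_congr rfl fun j _ => ?_
  simp
  linear_combination (-(A (Pi.single j 1) + I * A (Pi.single j I))) * Complex.re_add_im (c j) + ((c j).im * A (Pi.single j I)) * Complex.I_sq

lemma cs_unit (c f : Fin n → ℂ) (hc : ∑ j, Complex.normSq (c j) = 1) :
    ‖∑ j, c j * f j‖ ^ 2 ≤ ∑ j, ‖f j‖ ^ 2 := by
  have h1 : ‖∑ j, c j * f j‖ ≤ ∑ j, ‖c j‖ * ‖f j‖ :=
    (norm_sum_le _ _).trans (le_of_eq (by simp))
  calc ‖∑ j, c j * f j‖ ^ 2 ≤ (∑ j, ‖c j‖ * ‖f j‖) ^ 2 := by gcongr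
    _ ≤ (∑ j, ‖c j‖ ^ 2) * ∑ j, ‖f j‖ ^ 2 := Finset.sum_mul_sq_le_sq_mul_sq _ _ _
    _ = ∑ j, ‖f j‖ ^ 2 := by
      simp_rw [← Complex.normSq_eq_norm_sq, hc, one_mul]

lemma wexp_cont : Continuous fun z : Fin n → ℂ => Real.exp (∑ j, Complex.normSq (z j)) := by
  have := Complex.continuous_normSq
  fun_prop

lemma wgtQ_cont : Continuous fun p : (Fin n → ℂ) × (Fin d → ℝ) => wgtQ p := by
  have := Complex.continuous_normSq
  unfold wgtQ
  fun_prop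

lemma wint (f : (Fin n → ℂ) → ℂ) (hf : Continuous f) (hc : HasCompactSupport f) :
    Integrable fun z => ‖f z‖ ^ 2 * Real.exp (∑ j, Complex.normSq (z j)) := by
  have h1 : Continuous fun z => ‖f z‖ ^ 2 * Real.exp (∑ j, Complex.normSq (z j)) :=
    (hf.norm.pow 2).mul wexp_cont
  refine h1.integrable_of_hasCompactSupport (HasCompactSupport.intro hc.isCompact fun z hz => ?_)
  rw [image_eq_zero_of_notMem_tsupport hz]
  simp

lemma fibre_est (hn : 4 ≤ n) (H : Fin d → Matrix (Fin n) (Fin n) ℂ)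
    (hH : ∀ l, (H l).IsHermitian) (hpc : TwoPseudoconcave H)
    {u : (Fin n → ℂ) × (Fin d → ℝ) → ℂ} (hu : ContDiff ℝ ∞ u) (hc : HasCompactSupport u)
    (ξ : Fin d → ℝ) :
    ∫⁻ z, ENNReal.ofReal (‖PFQ ξ u z‖ ^ 2 * Real.exp (∑ j, Complex.normSq (z j))) ≤
      ∑ j, ∫⁻ z, ENNReal.ofReal
        (‖PFQ ξ (LbarQ H j u) z‖ ^ 2 * Real.exp (∑ j, Complex.normSq (z j))) := by
  have hPc : ∀ {v : (Fin n → ℂ) × (Fin d → ℝ) → ℂ}, ContDiff ℝ ∞ v → HasCompactSupport v →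
      Continuous (PFQ ξ v) := fun hv hvc => (PFQ_contDiff hv hvc ξ).continuous
  have hI : ∀ {v : (Fin n → ℂ) × (Fin d → ℝ) → ℂ}, ContDiff ℝ ∞ v → HasCompactSupport v →
      Integrable fun z => ‖PFQ ξ v z‖ ^ 2 * Real.exp (∑ j, Complex.normSq (z j)) :=
    fun hv hvc => wint _ (hPc hv hvc) (PFQ_hcs hvc ξ)
  have hIj := fun j => hI (LbarQ_contDiff H j hu) (LbarQ_hcs H j hc)
  rw [← ofReal_integral_eq_lintegral_ofReal (hI hu hc)
    (Filter.Eventually.of_forall fun _ => by positivity)]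
  simp_rw [fun j => (ofReal_integral_eq_lintegral_ofReal (hIj j)
    (Filter.Eventually.of_forall fun _ => by positivity)).symm]
  rw [← ENNReal.ofReal_sum_of_nonneg (fun j _ => integral_nonneg fun _ => by positivity)]
  apply ENNReal.ofReal_le_ofReal
  obtain ⟨c, m, hc1, hm, hcm⟩ := exists_dir hn H hH hpc (fun l => 2 * Real.pi * ξ l)
  refine (core_two (PFQ ξ u) (PFQ_contDiff hu hc ξ) (PFQ_hcs hc ξ) c hc1 m hm).trans ?_
  rw [← integral_finsetSum _ (fun j _ => hIj j)]
  have key : ∀ z, (1 / 2 : ℂ) * (fderiv ℝ (PFQ ξ u) z (fun j => (starRingEnd ℂ) (c j))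
          + I * fderiv ℝ (PFQ ξ u) z (fun j => I * (starRingEnd ℂ) (c j)))
        + m * (∑ k, c k * z k) * PFQ ξ u z = ∑ j, c j * PFQ ξ (LbarQ H j u) z := by
    intro z
    simp_rw [PFQ_Lbar H _ hu hc ξ z]
    rw [← dir_sum]
    simp_rw [mul_add, Finset.sum_add_distrib, Finset.mul_sum]
    rw [mul_add]
    simp_rw [Finset.mul_sum]
    congr 1
    · congr 1
      · refine Finset.sum_congr rfl fun j _ => ?_
        ring
      · refine Finset.sum_congr rfl fun j _ => ?_
        ring
    · simp_rw [Finset.sum_mul, Finset.mul_sum]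
      rw [Finset.sum_comm]
      refine Finset.sum_congr rfl fun k _ => ?_
      have := hcm k
      calc (m : ℂ) * (c k * z k) * PFQ ξ u z = (m * c k) * (z k * PFQ ξ u z) := by ring
        _ = _ := by
          rw [← this, Finset.sum_mul]
          refine Finset.sum_congr rfl fun j _ => ?_
          rw [Finset.sum_mul, Finset.sum_mul]
          refine Finset.sum_congr rfl fun l _ => ?_
          ring
  simp_rw [key]
  refine integral_mono_of_nonneg (Filter.Eventually.of_forall fun _ => by positivity)
    (integrable_finsetSum _ (fun j _ => hIj j)) (Filter.Eventually.of_forall fun z => ?_)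
  simp only
  rw [← Finset.sum_mul]
  gcongr
  exact cs_unit c _ hc1

set_option maxHeartbeats 1000000 in
lemma tonelli {v : (Fin n → ℂ) × (Fin d → ℝ) → ℂ} (hv : ContDiff ℝ ∞ v)
    (hc : HasCompactSupport v) :
    ∫⁻ p, ENNReal.ofReal (‖v p‖ ^ 2 * wgtQ p) = ∫⁻ ξ : Fin d → ℝ, ∫⁻ z,
      ENNReal.ofReal (‖PFQ ξ v z‖ ^ 2 * Real.exp (∑ j, Complex.normSq (z j))) := by
  have hw := wgtQ_cont (n := n) (d := d)
  have hm : Continuous fun q : (Fin d → ℝ) × (Fin n → ℂ) =>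
      ENNReal.ofReal (‖PFQ q.1 v q.2‖ ^ 2 * Real.exp (∑ j, Complex.normSq (q.2 j))) := by
    have h1 := PFQ_cont hv.continuous hc
    have h2 : Continuous fun q : (Fin d → ℝ) × (Fin n → ℂ) =>
        Real.exp (∑ j, Complex.normSq (q.2 j)) := by
      have := Complex.continuous_normSq
      fun_prop
    exact ENNReal.continuous_ofReal.comp ((h1.norm.pow 2).mul h2)
  have hm2 : Continuous fun p : (Fin n → ℂ) × (Fin d → ℝ) =>
      ENNReal.ofReal (‖v p‖ ^ 2 * wgtQ p) :=
    ENNReal.continuous_ofReal.comp ((hv.continuous.norm.pow 2).mul hw)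
  rw [lintegral_lintegral_swap (f := fun (ξ : Fin d → ℝ) z =>
      ENNReal.ofReal (‖PFQ ξ v z‖ ^ 2 * Real.exp (∑ j, Complex.normSq (z j))))
      hm.measurable.aemeasurable]
  rw [Measure.volume_eq_prod, lintegral_prod _ hm2.measurable.aemeasurable]
  refine lintegral_congr fun z => ?_
  simp only [wgtQ]
  simp_rw [fun a : ℂ => ENNReal.ofReal_mul (p := ‖a‖ ^ 2)
    (q := Real.exp (∑ j, Complex.normSq (z j))) (by positivity)]
  rw [lintegral_mul_const' _ _ ENNReal.ofReal_ne_top, lintegral_mul_const' _ _ ENNReal.ofReal_ne_top,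
    PFQ_plancherel hv hc z]

lemma full_integrable {v : (Fin n → ℂ) × (Fin d → ℝ) → ℂ} (hv : ContDiff ℝ ∞ v)
    (hc : HasCompactSupport v) : Integrable fun p => ‖v p‖ ^ 2 * wgtQ p := by
  have h1 : Continuous fun p => ‖v p‖ ^ 2 * wgtQ p := (hv.continuous.norm.pow 2).mul wgtQ_cont
  refine h1.integrable_of_hasCompactSupport (HasCompactSupport.intro hc.isCompact fun z hz => ?_)
  rw [image_eq_zero_of_notMem_tsupport hz]
  simp

end Final

theorem quadratic_CR_function_estimate (n d : ℕ) (hn : 4 ≤ n) (hd : 1 ≤ d)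
    (H : Fin d → Matrix (Fin n) (Fin n) ℂ)
    (hH : ∀ ℓ, (H ℓ).IsHermitian) (hpc : TwoPseudoconcave H)
    (u : (Fin n → ℂ) × (Fin d → ℝ) → ℂ)
    (hu : ContDiff ℝ (⊤ : ℕ∞) u) (hucs : HasCompactSupport u) :
    ∫ p : (Fin n → ℂ) × (Fin d → ℝ), ‖u p‖ ^ 2 * wgtQ p
      ≤ ∑ j, ∫ p : (Fin n → ℂ) × (Fin d → ℝ), ‖LbarQ H j u p‖ ^ 2 * wgtQ p := by
  have hw : ∀ p : (Fin n → ℂ) × (Fin d → ℝ), 0 ≤ wgtQ p := fun p => (Real.exp_pos _).le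
  have hIj := fun j => full_integrable (LbarQ_contDiff H j hu) (LbarQ_hcs H j hucs)
  rw [← ENNReal.ofReal_le_ofReal_iff (Finset.sum_nonneg fun j _ => integral_nonneg fun p =>
      mul_nonneg (by positivity) (hw p)),
    ENNReal.ofReal_sum_of_nonneg (fun j _ => integral_nonneg fun p =>
      mul_nonneg (by positivity) (hw p)),
    ofReal_integral_eq_lintegral_ofReal (full_integrable hu hucs)
      (Filter.Eventually.of_forall fun p => mul_nonneg (by positivity) (hw p)),
    tonelli hu hucs]
  have e : ∀ j, ENNReal.ofReal (∫ p, ‖LbarQ H j u p‖ ^ 2 * wgtQ p) = _ := fun j =>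
    (ofReal_integral_eq_lintegral_ofReal (hIj j)
      (Filter.Eventually.of_forall fun p => mul_nonneg (by positivity) (hw p))).trans
    (tonelli (LbarQ_contDiff H j hu) (LbarQ_hcs H j hucs))
  simp_rw [e]
  rw [← lintegral_finsetSum']
  · exact lintegral_mono fun ξ => fibre_est hn H hH hpc hu hucs ξ
  · intro j _
    refine Measurable.aemeasurable ?_
    refine Measurable.lintegral_prod_right' (f := fun q : (Fin d → ℝ) × (Fin n → ℂ) =>
      ENNReal.ofReal (‖PFQ q.1 (LbarQ H j u) q.2‖ ^ 2 * Real.exp (∑ j, Complex.normSq (q.2 j)))) ?_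
    refine (ENNReal.continuous_ofReal.comp (Continuous.mul (Continuous.pow
      (Continuous.norm ?_) 2) ?_)).measurable
    · exact PFQ_cont (LbarQ_contDiff H j hu).continuous (LbarQ_hcs H j hucs)
    · have := Complex.continuous_normSq
      fun_prop
end
end

section
/- Let ε_1 = ε_2 = −1, ε_3 = ε_4 = 1, and on ℂ⁴ × ℝ consider the vector fields L̄_j = ∂/∂z̄_j − i ε_j z_j ∂/∂x, j = 1,...,4. If u : ℂ⁴ × ℝ → ℂ is a smooth compactly supported function satisfying L̄_j u = 0 for all j = 1,...,4 (i.e. u is a compactly supported CR function on the hypersurface M = {y = |z_1|² + |z_2|² − |z_3|² − |z_4|²} ⊂ ℂ⁵, identified with ℂ⁴ × ℝ), then u ≡ 0. -/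
open MeasureTheory Complex Finset

noncomputable section

/-- Wirtinger derivative `∂u/∂z̄_j` in the `z` variables on `ℂ⁴ × ℝ`. -/
def wbarP (j : Fin 4) (u : (Fin 4 → ℂ) × ℝ → ℂ) (p : (Fin 4 → ℂ) × ℝ) : ℂ :=
  (1 / 2 : ℂ) * (fderiv ℝ u p (Pi.single j 1, 0)
    + Complex.I * fderiv ℝ u p (Pi.single j Complex.I, 0))

/-- Wirtinger derivative `∂u/∂z_j` in the `z` variables on `ℂ⁴ × ℝ`. -/
def wholP (j : Fin 4) (u : (Fin 4 → ℂ) × ℝ → ℂ) (p : (Fin 4 → ℂ) × ℝ) : ℂ :=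
  (1 / 2 : ℂ) * (fderiv ℝ u p (Pi.single j 1, 0)
    - Complex.I * fderiv ℝ u p (Pi.single j Complex.I, 0))

/-- The derivative `∂u/∂x` in the real variable on `ℂ⁴ × ℝ`. -/
def dxP (u : (Fin 4 → ℂ) × ℝ → ℂ) (p : (Fin 4 → ℂ) × ℝ) : ℂ :=
  fderiv ℝ u p (0, 1)

/-- The vector field `L̄_j = ∂/∂z̄_j − i ε_j z_j ∂/∂x`. -/
def Lbar (j : Fin 4) (u : (Fin 4 → ℂ) × ℝ → ℂ) (p : (Fin 4 → ℂ) × ℝ) : ℂ :=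
  wbarP j u p - Complex.I * (eps j : ℂ) * p.1 j * dxP u p

/-- The vector field `L_j = ∂/∂z_j + i ε_j z̄_j ∂/∂x`. -/
def Lhol (j : Fin 4) (u : (Fin 4 → ℂ) × ℝ → ℂ) (p : (Fin 4 → ℂ) × ℝ) : ℂ :=
  wholP j u p + Complex.I * (eps j : ℂ) * (starRingEnd ℂ) (p.1 j) * dxP u p

/-- The weight `e^{|z|²}`. -/
def wgtP (p : (Fin 4 → ℂ) × ℝ) : ℝ := Real.exp (∑ j, Complex.normSq (p.1 j))

lemma slice_compact {g : ℂ × ℝ → ℂ} (hc : HasCompactSupport g) (w : ℂ) :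
    HasCompactSupport (fun x : ℝ => g (w, x)) := by
  have : Topology.IsClosedEmbedding (fun x : ℝ => (w, x)) :=
    Function.LeftInverse.isClosedEmbedding (f := Prod.snd) (fun x => rfl)
      (by fun_prop) (by fun_prop)
  exact hc.comp_isClosedEmbedding this

lemma slice_integrable {E : Type*} [NormedAddCommGroup E] {g : ℂ × ℝ → E} (hg : Continuous g)
    (hc : HasCompactSupport g) (w : ℂ) : Integrable (fun x : ℝ => g (w, x)) := by
  have : Topology.IsClosedEmbedding (fun x : ℝ => (w, x)) :=
    Function.LeftInverse.isClosedEmbedding (f := Prod.snd) (fun x => rfl)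
      (by fun_prop) (by fun_prop)
  exact (hg.comp (by fun_prop : Continuous (fun x : ℝ => (w, x)))).integrable_of_hasCompactSupport
    (hc.comp_isClosedEmbedding this)

/-- A compactly supported CR function on `ℂ × ℝ` has vanishing integrals over the real lines. -/
lemma integral_slice_zero {g : ℂ × ℝ → ℂ} (hg : ContDiff ℝ 1 g) (hc : HasCompactSupport g)
    (h : ∀ p, fderiv ℝ g p (1, 0) + I * fderiv ℝ g p (I, 0) = 2 * I * p.1 * fderiv ℝ g p (0, 1))
    (w : ℂ) : ∫ x : ℝ, g (w, x) = 0 := by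
  have hdiff : Differentiable ℝ g := hg.differentiable one_ne_zero
  have hcf : Continuous (fderiv ℝ g) := hg.continuous_fderiv one_ne_zero
  have hcc : HasCompactSupport (fderiv ℝ g) := hc.fderiv (𝕜 := ℝ)
  -- derivative in the parameter
  have hsub : ∀ w : ℂ, HasFDerivAt (fun w => ∫ x : ℝ, g (w, x))
      (∫ x : ℝ, (fderiv ℝ g (w, x)).comp (ContinuousLinearMap.inl ℝ ℂ ℝ)) w := by
    intro w
    set K : Set ℝ := Prod.snd '' tsupport (fderiv ℝ g) with hK
    have hKc : IsCompact K := IsCompact.image hcc continuous_snd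
    obtain ⟨C, hC⟩ := hcc.exists_bound_of_continuous hcf
    refine hasFDerivAt_integral_of_dominated_of_fderiv_le (s := Set.univ)
      (F := fun w x => g (w, x))
      (F' := fun w x => (fderiv ℝ g (w, x)).comp (ContinuousLinearMap.inl ℝ ℂ ℝ))
      (bound := K.indicator (fun _ => C * ‖ContinuousLinearMap.inl ℝ ℂ ℝ‖))
      Filter.univ_mem ?_ ?_ ?_ ?_ ?_ ?_
    · exact Filter.Eventually.of_forall fun w =>
        (slice_integrable hg.continuous hc w).aestronglyMeasurable
    · exact slice_integrable hg.continuous hc w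
    · refine Continuous.aestronglyMeasurable ?_
      have : Continuous (fun x : ℝ => fderiv ℝ g (w, x)) := hcf.comp (by fun_prop)
      exact this.clm_comp continuous_const
    · refine Filter.Eventually.of_forall fun x w _ => ?_
      by_cases hx : x ∈ K
      · rw [Set.indicator_of_mem hx]
        refine (ContinuousLinearMap.opNorm_comp_le _ _).trans ?_
        gcongr
        exact hC _
      · rw [Set.indicator_of_notMem hx]
        have : fderiv ℝ g (w, x) = 0 := by
          apply image_eq_zero_of_notMem_tsupport
          exact fun hm => hx ⟨_, hm, rfl⟩
        simp [this]
    · rw [integrable_indicator_iff hKc.measurableSet]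
      exact integrableOn_const hKc.measure_lt_top.ne
    · refine Filter.Eventually.of_forall fun x w _ => ?_
      exact HasFDerivAt.comp (g := g) (f := fun w => (w, x)) w
        (hdiff (w, x)).hasFDerivAt (hasFDerivAt_prodMk_left w x)
  have hInteg : ∀ w (v : ℂ × ℝ), Integrable (fun x : ℝ => fderiv ℝ g (w, x) v) := fun w v =>
    slice_integrable (g := fun p => fderiv ℝ g p v) (hcf.clm_apply continuous_const)
      (hcc.mono (fun p hp => by
        simp only [Function.mem_support] at hp ⊢
        intro h0; exact hp (by simp [h0]))) w
  have hInteg2 : ∀ w, Integrable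
      (fun x : ℝ => (fderiv ℝ g (w, x)).comp (ContinuousLinearMap.inl ℝ ℂ ℝ)) := fun w =>
    slice_integrable (g := fun p => (fderiv ℝ g p).comp (ContinuousLinearMap.inl ℝ ℂ ℝ))
      (hcf.clm_comp continuous_const)
      (hcc.mono (fun p hp => by
        simp only [Function.mem_support] at hp ⊢
        intro h0; exact hp (by simp [h0]))) w
  have hx0 : ∀ w, ∫ x : ℝ, fderiv ℝ g (w, x) (0, 1) = 0 := by
    intro w
    refine integral_eq_zero_of_hasDerivAt_of_integrable (f := fun x : ℝ => g (w, x)) (fun x => ?_)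
      (hInteg w _) (slice_integrable hg.continuous hc w)
    have := HasFDerivAt.comp (g := g) (f := fun x => (w, x)) x
        (hdiff (w, x)).hasFDerivAt (hasFDerivAt_prodMk_right w x)
    simpa [Function.comp_def] using this.hasDerivAt
  have hhol : Differentiable ℂ (fun w => ∫ x : ℝ, g (w, x)) := by
    intro w
    rw [differentiableAt_complex_iff_differentiableAt_real]
    refine ⟨(hsub w).differentiableAt, ?_⟩
    rw [(hsub w).fderiv, ContinuousLinearMap.integral_apply (hInteg2 w),
      ContinuousLinearMap.integral_apply (hInteg2 w)]
    simp only [ContinuousLinearMap.comp_apply, ContinuousLinearMap.inl_apply]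
    have h1 : ∫ x : ℝ, (fderiv ℝ g (w, x) (1, 0) + I * fderiv ℝ g (w, x) (I, 0)) = 0 := by
      simp_rw [h]
      rw [integral_const_mul, hx0, mul_zero]
    rw [integral_add (hInteg w _) ((hInteg w _).const_mul I), integral_const_mul] at h1
    rw [smul_eq_mul]
    linear_combination (-I) * h1 + (∫ x : ℝ, fderiv ℝ g (w, x) (I, 0)) * I_mul_I
  refine hhol.apply_eq_of_tendsto_cocompact w ?_
  refine tendsto_const_nhds.congr' ?_
  have hKc : IsCompact (Prod.fst '' tsupport g) := IsCompact.image hc continuous_fst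
  filter_upwards [hKc.compl_mem_cocompact] with w hw
  have : ∀ x : ℝ, g (w, x) = 0 := fun x =>
    image_eq_zero_of_notMem_tsupport fun hm => hw ⟨_, hm, rfl⟩
  simp [this]

/-- A compactly supported CR function on `ℂ × ℝ` vanishes. -/
lemma cr_zero {f : ℂ × ℝ → ℂ} (hf : ContDiff ℝ 1 f) (hc : HasCompactSupport f)
    (h : ∀ p, fderiv ℝ f p (1, 0) + I * fderiv ℝ f p (I, 0) = 2 * I * p.1 * fderiv ℝ f p (0, 1))
    (w : ℂ) (t : ℝ) : f (w, t) = 0 := by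
  have key : ∀ ξ : ℝ, ∫ x : ℝ, cexp (-I * ξ * x) * f (w, x) = 0 := by
    intro ξ
    let φ : ℂ × ℝ → ℂ := fun p => -I * ξ * (p.2 : ℂ) + ξ * (p.1 * (starRingEnd ℂ) p.1)
    have hφ : ∀ p : ℂ × ℝ, HasFDerivAt φ
        ((-I * ξ) • (ofRealCLM.comp (ContinuousLinearMap.snd ℝ ℂ ℝ)) +
          (ξ : ℂ) • (p.1 • ((conjCLE : ℂ →L[ℝ] ℂ).comp (ContinuousLinearMap.fst ℝ ℂ ℝ))
            + (starRingEnd ℂ) p.1 • ContinuousLinearMap.fst ℝ ℂ ℝ)) p := by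
      intro p
      refine HasFDerivAt.add ?_ ?_
      · exact ((ofRealCLM.comp (ContinuousLinearMap.snd ℝ ℂ ℝ)).hasFDerivAt (x := p)).const_mul _
      · refine HasFDerivAt.const_mul ?_ _
        exact ((ContinuousLinearMap.fst ℝ ℂ ℝ).hasFDerivAt (x := p)).mul
          (((conjCLE : ℂ →L[ℝ] ℂ).comp (ContinuousLinearMap.fst ℝ ℂ ℝ)).hasFDerivAt (x := p))
    have hφs : ContDiff ℝ 1 φ := by
      have h1 : ContDiff ℝ 1 (fun p : ℂ × ℝ => (p.2 : ℂ)) :=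
        (ofRealCLM.comp (ContinuousLinearMap.snd ℝ ℂ ℝ)).contDiff
      have h2 : ContDiff ℝ 1 (fun p : ℂ × ℝ => (starRingEnd ℂ) p.1) :=
        ((conjCLE : ℂ →L[ℝ] ℂ).comp (ContinuousLinearMap.fst ℝ ℂ ℝ)).contDiff
      exact (contDiff_const.mul h1).add (contDiff_const.mul (contDiff_fst.mul h2))
    have := integral_slice_zero (g := fun p => cexp (φ p) * f p) (hφs.cexp.mul hf)
      hc.mul_left ?_ w
    · have e : ∀ x : ℝ, cexp (φ (w, x)) * f (w, x) =
          cexp (ξ * (w * (starRingEnd ℂ) w)) * (cexp (-I * ξ * x) * f (w, x)) := by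
        intro x
        simp only [φ, Complex.exp_add]
        ring
      simp_rw [e] at this
      rw [integral_const_mul] at this
      exact (mul_eq_zero.1 this).resolve_left (exp_ne_zero _)
    · intro p
      have hd := ((hφ p).cexp.mul (hf.differentiable one_ne_zero p).hasFDerivAt).fderiv
      have hp := h p
      change fderiv ℝ (fun p => cexp (φ p) * f p) p _ + I * fderiv ℝ (fun p => cexp (φ p) * f p) p _
        = 2 * I * p.1 * fderiv ℝ (fun p => cexp (φ p) * f p) p _
      have hd' : fderiv ℝ (fun p => cexp (φ p) * f p) p = _ := hd
      rw [hd']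
      simp
      linear_combination cexp (φ p) * hp + cexp (φ p) * f p * ξ * ((starRingEnd ℂ) p.1 + p.1) * I_mul_I
  have hfc : Continuous (fun x : ℝ => f (w, x)) := hf.continuous.comp (by fun_prop)
  have hF : FourierTransform.fourier (fun x : ℝ => f (w, x)) = 0 := by
    ext ξ
    rw [Real.fourier_real_eq_integral_exp_smul]
    rw [Pi.zero_apply, ← key (2 * Real.pi * ξ)]
    congr 1
    ext x
    rw [smul_eq_mul]
    congr 2
    push_cast
    ring
  have := hfc.fourierInv_fourier_eq (slice_integrable hf.continuous hc w)
    (by rw [hF]; exact integrable_zero _ _ _)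
  have h2 := congrFun this t
  rw [← h2, hF, Real.fourierInv_eq']
  simp

theorem no_compactly_supported_CR_functions
    (u : (Fin 4 → ℂ) × ℝ → ℂ) (hu : ContDiff ℝ (⊤ : ℕ∞) u) (hucs : HasCompactSupport u)
    (hCR : ∀ (j : Fin 4) (p : (Fin 4 → ℂ) × ℝ), Lbar j u p = 0) :
    u = 0 := by
  ext ⟨z, t⟩
  let A : ℂ × ℝ →L[ℝ] (Fin 4 → ℂ) × ℝ :=
    ((ContinuousLinearMap.single ℝ (fun _ : Fin 4 => ℂ) 2).comp
      (ContinuousLinearMap.fst ℝ ℂ ℝ)).prod (ContinuousLinearMap.snd ℝ ℂ ℝ)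
  let B : ℂ × ℝ → (Fin 4 → ℂ) × ℝ := fun p => A p + (Function.update z 2 0, 0)
  have hBc : ContDiff ℝ 1 B := A.contDiff.add contDiff_const
  have hemb : Topology.IsClosedEmbedding B :=
    Function.LeftInverse.isClosedEmbedding (f := fun q => (q.1 2, q.2))
      (fun p => by simp [A, B]) (by fun_prop) hBc.continuous
  have hu1 : ContDiff ℝ 1 u := hu.of_le (by exact_mod_cast le_top)
  have hfd : ∀ p, fderiv ℝ (u ∘ B) p = (fderiv ℝ u (B p)).comp A := fun p =>
    ((hu1.differentiable one_ne_zero (B p)).hasFDerivAt.comp p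
      (A.hasFDerivAt.add_const _)).fderiv
  have h0 := cr_zero (f := u ∘ B) (hu1.comp hBc) (hucs.comp_isClosedEmbedding hemb) ?_ (z 2) t
  · have hz : B (z 2, t) = (z, t) := by
      refine Prod.ext ?_ (by simp [A, B])
      funext k
      by_cases hk : k = 2
      · subst hk
        simp [A, B]
      · simp [A, B, hk]
    simpa [hz] using h0
  · intro p
    have h1 := hCR 2 (B p)
    have hp : (B p).1 2 = p.1 := by simp [A, B]
    have he : eps 2 = 1 := by simp [eps]
    have a1 : A (1, 0) = (Pi.single 2 1, 0) := by simp [A]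
    have a2 : A (I, 0) = (Pi.single 2 I, 0) := by simp [A]
    have a3 : A (0, 1) = (0, 1) := by simp [A]
    rw [hfd, ContinuousLinearMap.comp_apply, ContinuousLinearMap.comp_apply,
      ContinuousLinearMap.comp_apply, a1, a2, a3]
    rw [Lbar, wbarP, dxP, hp, he] at h1
    push_cast at h1
    linear_combination 2 * h1
end
end
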